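/- arXiv:1903.00813 — 5 statements merged into one kernel-verified Lean document; each statement's English description precedes it below -/
import Mathlib

section
/- For all integers d ≥ 1, p ≥ 2, and n ≥ 1, C_{d,p}(n) = (1/n) · ∑ over all tuples of nonnegative integers (t_1, …, t_d) with ∑_{k=1}^{d} t_k(p^k − 1) = n − 1 of [ multinomial(n−1+t_1+⋯+t_d ; n−1, t_1, t_2, …, t_d) · ∏_{k=1}^{d} ( (−1)^{t_k(k+1)} · binom(d,k)^{t_k} ) ], where multinomial(m; m_0,…,m_d) = m!/(m_0!·m_1!⋯m_d!) for m = m_0+⋯+m_d. -/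
open PowerSeries in
theorem aux_expand (a H : PowerSeries ℚ) (hH : PowerSeries.constantCoeff H = 0) (N : ℕ) :
    ∃ r : PowerSeries ℚ, a.subst H =
      ∑ i ∈ Finset.range N, C (coeff i a) * H ^ i + H ^ N * r := by
  have hs : HasSubst H := HasSubst.of_constantCoeff_zero' hH
  refine ⟨(PowerSeries.mk fun i => coeff (i + N) a).subst H, ?_⟩
  conv_lhs => rw [eq_X_pow_mul_shift_add_trunc N a]
  rw [subst_add hs, subst_mul hs, subst_pow hs, subst_X hs, add_comm, subst_coe hs,
    Polynomial.aeval_def, eval₂_trunc_eq_sum_range]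
  rfl

open PowerSeries in
theorem aux_left (f y : PowerSeries ℚ) (hf : constantCoeff f = 0) (hf1 : coeff 1 f = 1)
    (hy : constantCoeff y = 0) (h : f.subst y = (X : PowerSeries ℚ)) :
    y.subst f = (X : PowerSeries ℚ) := by
  have hu : IsUnit (coeff 1 f) := by rw [hf1]; exact isUnit_one
  have hsf : HasSubst f := HasSubst.of_constantCoeff_zero' hf
  have hsy : HasSubst y := HasSubst.of_constantCoeff_zero' hy
  have h2 := subst_substInvOfIsUnit_left f hf hu
  have h3 := subst_comp_subst_apply hsf hsy (f.substInvOfIsUnit hu)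
  rw [h2, h, X_subst, subst_X hsy] at h3
  rw [h3, h2]

open PowerSeries in
theorem aux_res (u φ : PowerSeries ℚ) (h : φ * u = 1) (h0 : constantCoeff u = 1) (m : ℕ) :
    coeff m (φ ^ (m + 1) * derivative ℚ (X * u)) = if m = 0 then 1 else 0 := by
  have hd : derivative ℚ (X * u) = u + X * derivative ℚ u := by
    rw [Derivation.leibniz]; simp; ring
  rcases m with _ | m
  · rw [hd]
    have := congrArg constantCoeff h
    simp [h0] at this
    simp [h0, this]
  · have h1 : derivative ℚ φ * u + φ * derivative ℚ u = 0 := by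
      have := congrArg (derivative ℚ) h
      rw [Derivation.leibniz] at this
      simp at this
      linear_combination this
    have key : φ ^ (m + 1 + 1) * derivative ℚ (X * u) =
        φ ^ (m + 1) - X * (φ ^ m * derivative ℚ φ) := by
      rw [hd]
      have : φ * (φ * derivative ℚ u) = - derivative ℚ φ := by
        linear_combination φ * h1 - derivative ℚ φ * h
      linear_combination φ ^ (m+1) * h + φ ^ m * X * this
    have h3 : derivative ℚ (φ ^ (m + 1)) = C ((m : ℚ) + 1) * (φ ^ m * derivative ℚ φ) := by
      rw [derivative_pow]; simp; ring
    have h4 := coeff_derivative (R := ℚ) (φ ^ (m + 1)) m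
    rw [h3, coeff_C_mul] at h4
    have : (m : ℚ) + 1 ≠ 0 := by positivity
    have h5 : coeff m (φ ^ m * derivative ℚ φ) = coeff (m + 1) (φ ^ (m + 1)) := by
      apply mul_left_cancel₀ this; rw [h4]; ring
    rw [key, map_sub, coeff_succ_X_mul, h5]; simp

open PowerSeries in
theorem aux_lagrange (u φ y : PowerSeries ℚ) (h : φ * u = 1) (h0 : constantCoeff u = 1)
    (hy : constantCoeff y = 0) (hX : (X * u).subst y = (X : PowerSeries ℚ)) (n : ℕ) :
    coeff n (φ ^ (n + 1)) = ((n : ℚ) + 1) * coeff (n + 1) y := by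
  have hf0 : constantCoeff (X * u) = 0 := by simp
  have hl := aux_left (X * u) y hf0 (by rw [coeff_one_mul]; simp [h0]) hy hX
  have hs : HasSubst (X * u) := HasSubst.of_constantCoeff_zero' hf0
  have hd := congrArg (derivative ℚ) hl
  rw [derivative_subst hs] at hd
  obtain ⟨r, hr⟩ := aux_expand (derivative ℚ y) (X * u) hf0 (n + 1)
  rw [hr, derivative_X] at hd
  have e1 : coeff n (φ ^ (n + 1)) =
      coeff n (φ ^ (n + 1) * ((∑ i ∈ Finset.range (n + 1),
        C (coeff i (derivative ℚ y)) * (X * u) ^ i + (X * u) ^ (n + 1) * r) *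
        derivative ℚ (X * u))) := by rw [hd, mul_one]
  have e2 : φ ^ (n + 1) * ((∑ i ∈ Finset.range (n + 1),
        C (coeff i (derivative ℚ y)) * (X * u) ^ i + (X * u) ^ (n + 1) * r) *
        derivative ℚ (X * u)) = ∑ i ∈ Finset.range (n + 1),
        C (coeff i (derivative ℚ y)) * (X ^ i * (φ ^ (n - i + 1) * derivative ℚ (X * u)))
        + X ^ (n + 1) * (r * derivative ℚ (X * u)) := by
    rw [add_mul, mul_add, Finset.sum_mul, Finset.mul_sum]
    congr 1
    · apply Finset.sum_congr rfl
      intro i hi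
      have hi : i ≤ n := by simpa [Nat.lt_succ_iff] using hi
      have : φ ^ (n + 1) * u ^ i = φ ^ (n - i + 1) := by
        rw [show n + 1 = (n - i + 1) + i by omega, pow_add, mul_assoc, ← mul_pow, h]; simp
      rw [mul_pow]
      linear_combination C (coeff i (derivative ℚ y)) * X ^ i * derivative ℚ (X * u) * this
    · have : φ ^ (n + 1) * u ^ (n + 1) = 1 := by rw [← mul_pow, h, one_pow]
      rw [mul_pow]
      linear_combination X ^ (n + 1) * r * derivative ℚ (X * u) * this
  rw [e1, e2, map_add, map_sum, coeff_X_pow_mul', if_neg (by omega), add_zero,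
    Finset.sum_range_succ, Finset.sum_eq_zero]
  · rw [coeff_C_mul, coeff_X_pow_mul', if_pos le_rfl, Nat.sub_self, aux_res u φ h h0 0,
      coeff_derivative]
    simp; ring
  · intro i hi
    have hi := Finset.mem_range.1 hi
    rw [coeff_C_mul, coeff_X_pow_mul', if_pos hi.le, aux_res u φ h h0, if_neg (by omega), mul_zero]

open PowerSeries in
theorem aux_phi (g φ : PowerSeries ℚ) (h : φ * (1 - g) = 1) (h0 : constantCoeff g = 0) (n : ℕ) :
    coeff n (φ ^ (n + 1)) =
      ∑ j ∈ Finset.range (n + 1), ((n + j).choose n : ℚ) * coeff n (g ^ j) := by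
  have hs : HasSubst g := HasSubst.of_constantCoeff_zero' h0
  have h1 := (invOneSubPow ℚ (n + 1)).val_inv
  rw [invOneSubPow_inv_eq_one_sub_pow, invOneSubPow_val_succ_eq_mk_add_choose] at h1
  have h2 := congrArg (substAlgHom hs : PowerSeries ℚ → PowerSeries ℚ) h1
  rw [map_mul, map_pow, map_sub, map_one, substAlgHom_X, coe_substAlgHom] at h2
  obtain ⟨r, hr⟩ := aux_expand (PowerSeries.mk fun j => ((n + j).choose n : ℚ)) g h0 (n + 1)
  have h3 : φ ^ (n + 1) * (1 - g) ^ (n + 1) = 1 := by rw [← mul_pow, h, one_pow]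
  have h4 : φ ^ (n + 1) = PowerSeries.subst g (PowerSeries.mk fun j => ((n + j).choose n : ℚ)) := by
    linear_combination (-φ ^ (n + 1)) * h2 +
      PowerSeries.subst g (PowerSeries.mk fun j => ((n + j).choose n : ℚ)) * h3
  obtain ⟨g', rfl⟩ := X_dvd_iff.2 h0
  rw [h4, hr, map_add, map_sum, mul_pow _ _ (n + 1), mul_assoc, coeff_X_pow_mul', if_neg (by omega),
    add_zero]
  refine Finset.sum_congr rfl fun j _ => ?_
  rw [coeff_C_mul, coeff_mk]

open PowerSeries in
theorem aux_multi (d n j : ℕ) (a : Fin d → ℚ) (q : Fin d → ℕ) :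
    coeff n ((∑ k, C (a k) * X ^ q k) ^ j) =
      ∑ t ∈ (Finset.piAntidiag Finset.univ j).filter (fun t => ∑ k, t k * q k = n),
        (Nat.multinomial Finset.univ t : ℚ) * ∏ k, a k ^ t k := by
  rw [Finset.sum_pow_eq_sum_piAntidiag, map_sum, Finset.sum_filter]
  apply Finset.sum_congr rfl
  intro t _
  have : (Nat.multinomial Finset.univ t : PowerSeries ℚ) * ∏ k, (C (a k) * X ^ q k) ^ t k =
     C ((Nat.multinomial Finset.univ t : ℚ) * ∏ k, a k ^ t k) * X ^ (∑ k, t k * q k) := by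
    simp only [mul_pow, Finset.prod_mul_distrib, ← pow_mul, Finset.prod_pow_eq_pow_sum, map_mul,
      map_prod, map_pow, map_natCast]
    rw [mul_assoc]
    simp only [mul_comm]
  rw [this, coeff_C_mul, coeff_X_pow]
  by_cases h : ∑ k, t k * q k = n
  · simp [h]
  · rw [if_neg h, if_neg (Ne.symm h), mul_zero]

open PowerSeries in
theorem aux_main (d n : ℕ) (a : Fin d → ℚ) (q : Fin d → ℕ) (hq : ∀ k, 1 ≤ q k) (y : PowerSeries ℚ)
    (hy : constantCoeff y = 0)
    (hX : y * (1 - ∑ k, C (a k) * y ^ q k) = X) :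
    coeff (n + 1) y = (1 / ((n : ℚ) + 1)) *
      ∑ t ∈ (Fintype.piFinset fun _ : Fin d => Finset.range (n + 1)).filter
            (fun t => ∑ k : Fin d, t k * q k = n),
          ((Nat.factorial (n + ∑ k : Fin d, t k) : ℚ) /
              ((Nat.factorial n : ℚ) * ∏ k : Fin d, (Nat.factorial (t k) : ℚ))) *
            ∏ k : Fin d, a k ^ t k := by
  set g : PowerSeries ℚ := ∑ k, C (a k) * X ^ q k with hg
  have hg0 : constantCoeff g = 0 := by
    rw [hg, map_sum]
    apply Finset.sum_eq_zero
    intro k _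
    have := hq k
    simp [show q k ≠ 0 by omega]
  have hs : HasSubst y := HasSubst.of_constantCoeff_zero' hy
  have hu : constantCoeff (1 - g) = 1 := by simp [hg0]
  have h : (1 - g)⁻¹ * (1 - g) = 1 := PowerSeries.inv_mul_cancel _ (by rw [hu]; exact one_ne_zero)
  have hX' : (X * (1 - g)).subst y = (X : PowerSeries ℚ) := by
    refine Eq.trans ?_ hX
    rw [← coe_substAlgHom hs]
    simp only [hg, map_mul, map_sub, map_one, map_sum, map_pow, substAlgHom_X]
    congr 2
    apply Finset.sum_congr rfl
    intro k _
    congr 1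
    rw [coe_substAlgHom, subst_C]; rfl
  have e := aux_lagrange (1 - g) _ y h hu hy hX' n
  rw [aux_phi g _ h hg0] at e
  have hne : (n : ℚ) + 1 ≠ 0 := by positivity
  rw [one_div, eq_inv_mul_iff_mul_eq₀ hne, ← e]
  have hle : ∀ t : Fin d → ℕ, ∑ k, t k * q k = n → ∑ k, t k ≤ n := by
    intro t ht
    rw [← ht]
    exact Finset.sum_le_sum fun k _ => Nat.le_mul_of_pos_right _ (hq k)
  rw [← Finset.sum_fiberwise_of_maps_to (t := Finset.range (n + 1)) (g := fun t : Fin d → ℕ => ∑ k, t k)]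
  · apply Finset.sum_congr rfl
    intro j hj
    rw [hg, aux_multi, Finset.mul_sum]
    apply Finset.sum_congr
    · ext t
      simp only [Finset.mem_filter, Finset.mem_piAntidiag, Fintype.mem_piFinset, Finset.mem_range,
        Finset.mem_univ, implies_true, and_true]
      constructor
      · rintro ⟨h1, h2⟩
        refine ⟨⟨fun k => ?_, h2⟩, h1⟩
        have := Finset.single_le_sum (f := t) (fun _ _ => Nat.zero_le _) (Finset.mem_univ k)
        have := hle t h2
        omega
      · rintro ⟨⟨_, h2⟩, h1⟩
        exact ⟨h1, h2⟩
    · intro t ht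
      have hj : ∑ k, t k = j := (Finset.mem_filter.1 ht).2
      have hm := Nat.multinomial_spec Finset.univ t
      rw [hj] at hm ⊢
      have hc := Nat.add_choose_mul_factorial_mul_factorial n j
      rw [← mul_assoc]
      congr 1
      rw [eq_div_iff (by positivity), ← hc, ← hm, Nat.choose_symm_add]
      push_cast
      ring
  · intro t ht
    have := hle t (Finset.mem_filter.1 ht).2
    rw [Finset.mem_range]; omega

/-- For all `d ≥ 1`, `p ≥ 2`, `n ≥ 1`,
`C_{d,p}(n) = (1/n) ⬝ ∑_{t_1,…,t_d ≥ 0, ∑ t_k (p^k - 1) = n-1}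
  multinomial(n-1+t_1+⋯+t_d; n-1, t_1, …, t_d) ⬝ ∏_k (-1)^{t_k(k+1)} C(d,k)^{t_k}`,
where `C_{d,p}(n)` is the coefficient of `x^n` in the unique power series `y` with zero constant
term satisfying `∑_{k=0}^{d} (-1)^k C(d,k) y^{p^k} = x`.  Here the index `k : Fin d` corresponds
to the paper's index `k + 1 ∈ {1, …, d}`, and each solution tuple satisfies `t_k ≤ n - 1 < n`,
so summing over `t : Fin d → ℕ` with values in `Finset.range n` loses nothing. -/
theorem statement_1 (d p : ℕ) (hd : 1 ≤ d) (hp : 2 ≤ p)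
    (y : PowerSeries ℚ)
    (h0 : PowerSeries.constantCoeff y = 0)
    (heq : ∑ k ∈ Finset.range (d + 1),
        (-1 : PowerSeries ℚ) ^ k * (d.choose k : PowerSeries ℚ) * y ^ p ^ k
        = PowerSeries.X)
    (n : ℕ) (hn : 1 ≤ n) :
    PowerSeries.coeff n y =
      (1 / (n : ℚ)) *
        ∑ t ∈ (Fintype.piFinset fun _ : Fin d => Finset.range n).filter
            (fun t => ∑ k : Fin d, t k * (p ^ (k.1 + 1) - 1) = n - 1),
          ((Nat.factorial (n - 1 + ∑ k : Fin d, t k) : ℚ) /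
              ((Nat.factorial (n - 1) : ℚ) * ∏ k : Fin d, (Nat.factorial (t k) : ℚ))) *
            ∏ k : Fin d,
              (-1 : ℚ) ^ (t k * (k.1 + 2)) * (d.choose (k.1 + 1) : ℚ) ^ t k := by
  obtain ⟨m, rfl⟩ : ∃ m, n = m + 1 := ⟨n - 1, by omega⟩
  have hp1 : ∀ k : ℕ, 2 ≤ p ^ (k + 1) := fun k =>
    hp.trans (Nat.le_self_pow (Nat.succ_ne_zero k) p)
  have key := aux_main d m (fun k => (-1 : ℚ) ^ (k.1 + 2) * (d.choose (k.1 + 1) : ℚ))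
    (fun k => p ^ (k.1 + 1) - 1) (fun k => by have := hp1 k.1; omega) y h0 (by
      rw [← heq, Finset.sum_range_succ', ← Fin.sum_univ_eq_sum_range
        (fun k => (-1 : PowerSeries ℚ) ^ (k + 1) * (d.choose (k + 1) : PowerSeries ℚ)
          * y ^ p ^ (k + 1)), mul_sub, Finset.mul_sum, add_comm, sub_eq_add_neg,
        ← Finset.sum_neg_distrib]
      congr 1
      · simp
      · apply Finset.sum_congr rfl
        intro k _
        have : y ^ p ^ (k.1 + 1) = y * y ^ (p ^ (k.1 + 1) - 1) := by
          rw [← pow_succ']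
          congr 1
          have := hp1 k.1
          omega
        rw [this]
        simp only [map_mul, map_pow, map_neg, map_one, map_natCast]
        ring)
  rw [key]
  simp only [Nat.add_sub_cancel, Nat.cast_add, Nat.cast_one]
  congr 1
  apply Finset.sum_congr rfl
  intro t _
  congr 1
  apply Finset.prod_congr rfl
  intro k _
  rw [mul_pow, ← pow_mul, mul_comm (t k)]
end

section
/- For all integers n ≥ 1, C_{3,2}(n) = (1/n) · ∑_{j=0}^{⌊(n−1)/7⌋} ∑_{i=0}^{⌊(n−1−7j)/3⌋} multinomial(2(n−1−i−3j); n−1, n−1−3i−7j, i, j) · (−1)^i · 3^{n−1−2i−7j}, where multinomial(m; a,b,c,e) = m!/(a!·b!·c!·e!) for m = a+b+c+e. -/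
open PowerSeries in
lemma res_aux (w v : PowerSeries ℚ) (hw : w * v = 1) (s : ℕ) :
    coeff s (v ^ (s+1) * derivative ℚ (X * w)) = if s = 0 then 1 else 0 := by
  have hd : derivative ℚ (X * w) = w + X * derivative ℚ w := by
    simp [Derivation.leibniz, add_comm, mul_comm]
  rw [hd]
  have e : v ^ (s+1) * (w + X * derivative ℚ w) = v ^ s + X * (v^(s+1) * derivative ℚ w) := by
    linear_combination v^s * hw
  rw [e]
  rcases s with _ | s
  · simp
  · have h1 : w * derivative ℚ v + v * derivative ℚ w = 0 := by
      have := congrArg (derivative ℚ) hw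
      simpa [Derivation.leibniz] using this
    have h2 : derivative ℚ (v^(s+1)) = -((s+1 : ℕ) : PowerSeries ℚ) * (v^(s+1+1) * derivative ℚ w) := by
      rw [Derivation.leibniz_pow]
      simp only [Nat.add_sub_cancel, smul_eq_mul, nsmul_eq_mul]
      linear_combination (-((s+1 : ℕ) : PowerSeries ℚ) * v^s * derivative ℚ v) * hw + ((s+1 : ℕ) : PowerSeries ℚ) * v^(s+1) * h1
    have h3 := congrArg (coeff s) h2
    have hc : (-((s+1 : ℕ) : PowerSeries ℚ)) = C (-((s+1 : ℕ) : ℚ)) := by simp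
    rw [hc, coeff_C_mul, coeff_derivative] at h3
    rw [map_add, coeff_succ_X_mul]
    push_cast at h3
    have : (s:ℚ)+1 ≠ 0 := by positivity
    simp only [Nat.add_eq_zero_iff, one_ne_zero, and_false, if_false]
    apply mul_left_cancel₀ this
    linear_combination h3

lemma trunc_inv (n : ℕ) (hn : 1 ≤ n) : ∃ B : Polynomial ℚ,
    (1 - Polynomial.X)^n * (∑ m ∈ Finset.range n, Polynomial.C (((n-1+m).choose (n-1) : ℕ) : ℚ) * Polynomial.X ^ m) = 1 + Polynomial.X^n * B := by
  obtain ⟨d, rfl⟩ : ∃ d, n = d+1 := ⟨n-1, by omega⟩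
  set F : Polynomial ℚ := (∑ m ∈ Finset.range (d+1), Polynomial.C (((d+1-1+m).choose (d+1-1) : ℕ) : ℚ) * Polynomial.X ^ m) with hF
  have : (Polynomial.X : Polynomial ℚ)^(d+1) ∣ (1 - Polynomial.X)^(d+1) * F - 1 := by
    rw [Polynomial.X_pow_dvd_iff]
    intro k hk
    have hF' : (PowerSeries.X : PowerSeries ℚ)^(d+1) ∣ (F : PowerSeries ℚ) - PowerSeries.mk (fun m => (((d+m).choose d : ℕ) : ℚ)) := by
      rw [PowerSeries.X_pow_dvd_iff]
      intro m hm
      simp [hF, Polynomial.coeff_C_mul, Polynomial.coeff_X_pow]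
      rw [if_pos (by omega), sub_self]
    obtain ⟨R, hR⟩ := hF'
    have h1 := PowerSeries.mk_add_choose_mul_one_sub_pow_eq_one ℚ d
    rw [← Polynomial.coeff_coe]
    push_cast
    have : (1 - (PowerSeries.X : PowerSeries ℚ))^(d+1) * (F : PowerSeries ℚ) - 1 = PowerSeries.X^(d+1) * ((1 - PowerSeries.X)^(d+1) * R) := by
      linear_combination (1 - PowerSeries.X)^(d+1) * hR + h1
    rw [this, PowerSeries.coeff_X_pow_mul', if_neg (by omega)]
  obtain ⟨B, hB⟩ := this
  exact ⟨B, by linear_combination hB⟩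

open PowerSeries in
lemma coeff_eval (w v : PowerSeries ℚ) (hw : w * v = 1) (n : ℕ) (A : Polynomial ℚ) :
    coeff n (Polynomial.aeval (X * w) A * v^(n+1) * derivative ℚ (X * w)) = A.coeff n := by
  induction A using Polynomial.induction_on' with
  | add p q hp hq => simp only [map_add, add_mul, hp, hq, Polynomial.coeff_add]
  | monomial k a =>
    rw [Polynomial.aeval_monomial, Polynomial.coeff_monomial]
    have : (algebraMap ℚ (PowerSeries ℚ)) a * (X*w)^k * v^(n+1) * derivative ℚ (X*w)
      = C a * (X^k * (w^k * v^(n+1) * derivative ℚ (X * w))) := by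
      rw [show algebraMap ℚ (PowerSeries ℚ) a = C a from rfl]; ring
    rw [this, coeff_C_mul, coeff_X_pow_mul']
    split_ifs with h1 h2 h2
    · subst h2
      have := res_aux w v hw 0
      rw [pow_succ, ← mul_assoc, ← mul_pow, hw]
      simp at this ⊢
      simp [this]
    · obtain ⟨s, rfl⟩ := Nat.exists_eq_add_of_le h1
      have := res_aux w v hw s
      have e : w^k * v^(k+s+1) = v^(s+1) := by
        rw [add_assoc, pow_add, ← mul_assoc, ← mul_pow, hw]; simp
      rw [e, Nat.add_sub_cancel_left, this, if_neg (by omega), mul_zero]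
    · omega
    · simp

open Polynomial in
lemma coeff_h (n m : ℕ) (hm : m < n) : 
    ((3 * X - 3 * X^3 + X^7 : ℚ[X])^m).coeff (n-1) = ∑ j ∈ Finset.range n, ∑ i ∈ Finset.range n,
      if m + 2 * i + 6 * j = n - 1 then
        (m.choose j : ℚ) * ((m-j).choose i : ℚ) * (-1)^i * 3^(m-j) else 0 := by
  have e : (3 * X - 3 * X^3 + X^7 : ℚ[X]) = X^7 + (-3 * X^3 + 3 * X) := by ring
  rw [e, add_pow]
  have : ∀ j ∈ Finset.range (m+1), ((X:ℚ[X])^7)^j * (-3 * X^3 + 3 * X)^(m-j) * (m.choose j : ℚ[X])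
      = ∑ i ∈ Finset.range n, C ((m.choose j : ℚ) * ((m-j).choose i : ℚ) * (-1)^i * 3^(m-j)) * X^(m+2*i+6*j) := by
    intro j hj
    simp at hj
    rw [add_pow, Finset.mul_sum, Finset.sum_mul]
    rw [← Finset.sum_subset (s₁ := Finset.range (m-j+1)) (s₂ := Finset.range n)]
    · apply Finset.sum_congr rfl
      intro i hi
      simp at hi
      obtain ⟨t, rfl⟩ : ∃ t, m = t + i + j := ⟨m - i - j, by omega⟩
      have e1 : t + i + j - j = t + i := by omega
      have e2 : t + i - i = t := by omega
      rw [e1, e2]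
      simp only [map_mul, map_pow, map_neg, map_one, map_natCast, map_ofNat]
      rw [neg_mul, neg_pow]
      ring
    · intro x; simp; omega
    · intro x _ hx
      simp at hx
      rw [Nat.choose_eq_zero_of_lt (by omega : m - j < x)]
      simp
  rw [Finset.sum_congr rfl this, finsetSum_coeff]
  rw [← Finset.sum_subset (s₁ := Finset.range (m+1)) (s₂ := Finset.range n)]
  · simp only [finsetSum_coeff, coeff_C_mul, coeff_X_pow]
    simp only [mul_ite, mul_one, mul_zero, eq_comm]
  · intro x; simp; omega
  · intro x _ hx
    simp at hx
    rw [Nat.choose_eq_zero_of_lt (by omega : m < x)]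
    simp

lemma final_sum (n : ℕ) (hn : 1 ≤ n) :
    ∑ m ∈ Finset.range n, (((n-1+m).choose (n-1) : ℕ) : ℚ) * (∑ j ∈ Finset.range n, ∑ i ∈ Finset.range n,
      if m + 2 * i + 6 * j = n - 1 then
        (m.choose j : ℚ) * ((m-j).choose i : ℚ) * (-1)^i * 3^(m-j) else 0) = 
        ∑ j ∈ Finset.range ((n - 1) / 7 + 1),
          ∑ i ∈ Finset.range ((n - 1 - 7 * j) / 3 + 1),
            ((Nat.factorial (2 * (n - 1 - i - 3 * j)) : ℚ) /
                ((Nat.factorial (n - 1) : ℚ) * (Nat.factorial (n - 1 - 3 * i - 7 * j) : ℚ) *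
                  (Nat.factorial i : ℚ) * (Nat.factorial j : ℚ))) *
              (-1 : ℚ) ^ i * (3 : ℚ) ^ (n - 1 - 2 * i - 7 * j) := by
  simp only [Finset.mul_sum, mul_ite, mul_zero]
  rw [Finset.sum_comm]
  have key : ∀ i j, (∑ m ∈ Finset.range n, if m + 2 * i + 6 * j = n - 1 then
        (((n-1+m).choose (n-1) : ℕ) : ℚ) * ((m.choose j : ℚ) * ((m-j).choose i : ℚ) * (-1)^i * 3^(m-j)) else 0)
      = if 3 * i + 7 * j ≤ n - 1 then ((Nat.factorial (2 * (n - 1 - i - 3 * j)) : ℚ) /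
                ((Nat.factorial (n - 1) : ℚ) * (Nat.factorial (n - 1 - 3 * i - 7 * j) : ℚ) *
                  (Nat.factorial i : ℚ) * (Nat.factorial j : ℚ))) *
              (-1 : ℚ) ^ i * (3 : ℚ) ^ (n - 1 - 2 * i - 7 * j) else 0 := by
    intro i j
    split_ifs with h
    · obtain ⟨k, rfl⟩ : ∃ k, n = k + 3 * i + 7 * j + 1 := ⟨n - 1 - 3*i-7*j, by omega⟩
      rw [Finset.sum_eq_single (k+i+j)]
      · rw [if_pos (by omega)]
        have e1 : k + 3 * i + 7 * j + 1 - 1 = k + 3*i+7*j := by omega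
        rw [e1]
        have e2 : k + 3 * i + 7 * j - 3 * i - 7 * j = k := by omega
        have e3 : k + 3 * i + 7 * j - 2 * i - 7 * j = k + i := by omega
        have e4 : 2 * (k + 3 * i + 7 * j - i - 3 * j) = k + 3 * i + 7 * j + (k + i + j) := by omega
        have e5 : k + i + j - j = k + i := by omega
        rw [e2, e3, e4, e5, ← Nat.add_choose_mul_factorial_mul_factorial (k+3*i+7*j) (k+i+j),
          ← Nat.add_choose_mul_factorial_mul_factorial (k+i) j,
          ← Nat.add_choose_mul_factorial_mul_factorial k i,
          Nat.choose_symm_add (a := k+3*i+7*j) (b := k+i+j)]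
        have f1 : ((k+3*i+7*j).factorial : ℚ) ≠ 0 := by positivity
        have f2 : (k.factorial : ℚ) ≠ 0 := by positivity
        have f3 : (i.factorial : ℚ) ≠ 0 := by positivity
        have f4 : (j.factorial : ℚ) ≠ 0 := by positivity
        push_cast
        field_simp
      · intro b _ hb
        rw [if_neg (by omega)]
      · intro hb; simp at hb; omega
    · apply Finset.sum_eq_zero
      intro m _
      split_ifs with h2
      · by_cases hj : m < j
        · simp [Nat.choose_eq_zero_of_lt hj]
        · simp [Nat.choose_eq_zero_of_lt (by omega : m - j < i)]
      · rfl
  have : ∀ j ∈ Finset.range n, _ = _ := fun j _ => Finset.sum_comm (s := Finset.range n) (t := Finset.range n)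
    (f := fun m i => if m + 2 * i + 6 * j = n - 1 then
        (((n-1+m).choose (n-1) : ℕ) : ℚ) * ((m.choose j : ℚ) * ((m-j).choose i : ℚ) * (-1)^i * 3^(m-j)) else 0)
  rw [Finset.sum_congr rfl this]
  simp only [key]
  symm
  rw [← Finset.sum_subset (s₁ := Finset.range ((n-1)/7+1)) (s₂ := Finset.range n)]
  · apply Finset.sum_congr rfl
    intro j hj
    simp at hj
    rw [← Finset.sum_subset (s₁ := Finset.range ((n-1-7*j)/3+1)) (s₂ := Finset.range n)]
    · apply Finset.sum_congr rfl
      intro i hi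
      simp at hi
      rw [if_pos (by omega)]
    · intro x; simp; omega
    · intro x _ hx
      simp at hx
      rw [if_neg (by omega)]
  · intro x; simp; omega
  · intro x _ hx
    simp at hx
    apply Finset.sum_eq_zero
    intro i _
    rw [if_neg (by omega)]

/-- For all `n ≥ 1`,
`C_{3,2}(n) = (1/n) ⬝ ∑_{j=0}^{⌊(n-1)/7⌋} ∑_{i=0}^{⌊(n-1-7j)/3⌋}
  multinomial(2(n-1-i-3j); n-1, n-1-3i-7j, i, j) (-1)^i 3^{n-1-2i-7j}`,
where `C_{3,2}(n)` is the coefficient of `x^n` in the unique power series `y` with zero constant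
term satisfying `∑_{k=0}^{3} (-1)^k C(3,k) y^{2^k} = x`, and
`multinomial(m; a,b,c,e) = m!/(a! b! c! e!)` for `m = a + b + c + e`. -/
theorem statement_3
    (y : PowerSeries ℚ)
    (h0 : PowerSeries.constantCoeff y = 0)
    (heq : ∑ k ∈ Finset.range (3 + 1),
        (-1 : PowerSeries ℚ) ^ k * (Nat.choose 3 k : PowerSeries ℚ) * y ^ 2 ^ k
        = PowerSeries.X)
    (n : ℕ) (hn : 1 ≤ n) :
    PowerSeries.coeff n y =
      (1 / (n : ℚ)) *
        ∑ j ∈ Finset.range ((n - 1) / 7 + 1),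
          ∑ i ∈ Finset.range ((n - 1 - 7 * j) / 3 + 1),
            ((Nat.factorial (2 * (n - 1 - i - 3 * j)) : ℚ) /
                ((Nat.factorial (n - 1) : ℚ) * (Nat.factorial (n - 1 - 3 * i - 7 * j) : ℚ) *
                  (Nat.factorial i : ℚ) * (Nat.factorial j : ℚ))) *
              (-1 : ℚ) ^ i * (3 : ℚ) ^ (n - 1 - 2 * i - 7 * j) := by
  rw [← final_sum n hn]
  have hc : ∀ m ∈ Finset.range n, (((n-1+m).choose (n-1) : ℕ) : ℚ) * (∑ j ∈ Finset.range n, ∑ i ∈ Finset.range n,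
      if m + 2 * i + 6 * j = n - 1 then
        (m.choose j : ℚ) * ((m-j).choose i : ℚ) * (-1)^i * 3^(m-j) else 0) =
      (Polynomial.C (((n-1+m).choose (n-1) : ℕ) : ℚ) * (3 * Polynomial.X - 3 * Polynomial.X^3 + Polynomial.X^7 : Polynomial ℚ)^m).coeff (n-1) := by
    intro m hm
    rw [Polynomial.coeff_C_mul, coeff_h n m (by simpa using hm)]
  rw [Finset.sum_congr rfl hc, ← Polynomial.finsetSum_coeff]
  obtain ⟨w, rfl⟩ := PowerSeries.X_dvd_iff.mpr h0
  set y := PowerSeries.X * w with hy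
  set H : Polynomial ℚ := 3 * Polynomial.X - 3 * Polynomial.X^3 + Polynomial.X^7 with hH
  have hHy : Polynomial.aeval y H = 3 * y - 3 * y^3 + y^7 := by
    simp only [hH, map_add, map_sub, map_mul, map_pow, Polynomial.aeval_X, map_ofNat]
  have hw : w * (1 - Polynomial.aeval y H) = 1 := by
    apply mul_left_cancel₀ (PowerSeries.X_ne_zero (R := ℚ))
    rw [mul_one]
    conv_rhs => rw [← heq]
    rw [hHy, ← mul_assoc, ← hy]
    simp [Finset.sum_range_succ, Nat.choose]
    ring
  obtain ⟨B, hB⟩ := trunc_inv n hn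
  have hB' := congrArg (Polynomial.aeval (Polynomial.aeval y H)) hB
  rw [← coeff_eval w _ hw (n-1), ← hy, Nat.sub_add_cancel hn]
  have e : Polynomial.aeval y (∑ m ∈ Finset.range n, Polynomial.C (((n-1+m).choose (n-1) : ℕ) : ℚ) * H^m) * (1 - Polynomial.aeval y H)^n
     = 1 + PowerSeries.X^n * (w^n * (3 - 3 * y^2 + y^6)^n * Polynomial.aeval (Polynomial.aeval y H) B) := by
    simp only [map_mul, map_sum, map_pow, map_sub, map_one, map_add, Polynomial.aeval_X, Polynomial.aeval_C] at hB' ⊢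
    rw [mul_comm, hB', ← mul_assoc, ← mul_assoc, ← mul_pow, ← mul_pow, ← hy, hHy]
    ring
  rw [e, add_mul, one_mul, mul_assoc, map_add, PowerSeries.coeff_X_pow_mul', if_neg (by omega), PowerSeries.coeff_derivative, Nat.sub_add_cancel hn]
  have : (n:ℚ) ≠ 0 := by positivity
  rw [Nat.cast_sub hn]
  field_simp
  simp
end

section
/- For all odd integers n ≥ 1, writing m = (n−1)/2, one has C_{3,3}(n) = (1/n) · ∑_{j=0}^{⌊m/13⌋} ∑_{i=0}^{⌊(m−13j)/4⌋} multinomial(3(m − i − 4j); n−1, m − 4i − 13j, i, j) · (−1)^i · 3^{m − 3i − 13j}, where multinomial(M; a,b,c,e) = M!/(a!·b!·c!·e!) for M = a+b+c+e. -/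
open PowerSeries in
lemma lag_key (g h : PowerSeries ℚ) (hgh : g * h = 1) (r : ℕ) :
    coeff r (d⁄dX ℚ (X * g) * h ^ (r + 1)) = if r = 0 then 1 else 0 := by
  have hd : d⁄dX ℚ (X * g) = g + X * d⁄dX ℚ g := by
    rw [Derivation.leibniz, derivative_X]; simp only [smul_eq_mul]; ring
  have e1 : d⁄dX ℚ (X * g) * h ^ (r + 1) = h ^ r + X * (d⁄dX ℚ g * h ^ (r+1)) := by
    rw [hd]; linear_combination h ^ r * hgh
  split_ifs with hr
  · subst hr
    rw [e1]; simp
  · have hdd : d⁄dX ℚ (g * h) = 0 := by rw [hgh]; simp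
    rw [Derivation.leibniz] at hdd
    simp only [smul_eq_mul] at hdd
    have hh : d⁄dX ℚ h = - (h^2 * d⁄dX ℚ g) := by
      linear_combination h * hdd - d⁄dX ℚ h * hgh
    obtain ⟨s, rfl⟩ := Nat.exists_eq_succ_of_ne_zero hr
    have e2 : (C ((s + 1 : ℕ) : ℚ)) * (d⁄dX ℚ g * h ^ (s + 1 + 1)) = - d⁄dX ℚ (h ^ (s + 1)) := by
      rw [derivative_pow, hh]; simp; ring
    have e3 := congrArg (coeff s) e2
    rw [coeff_C_mul, map_neg, coeff_derivative] at e3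
    rw [Nat.succ_eq_add_one, e1, map_add, coeff_succ_X_mul]
    have : ((s + 1 : ℕ) : ℚ) ≠ 0 := by positivity
    apply mul_left_cancel₀ this
    rw [mul_add, e3]; push_cast; ring

open PowerSeries in
lemma lag (g h y : PowerSeries ℚ) (hgh : g * h = 1)
    (hy : y.subst (X * g) = (X : PowerSeries ℚ)) (n : ℕ) :
    coeff n (h ^ (n + 1)) = (n + 1) * coeff (n + 1) y := by
  have hP : HasSubst (X * g : PowerSeries ℚ) := HasSubst.of_constantCoeff_zero' (by simp)
  have h1 := congrArg (d⁄dX ℚ) hy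
  rw [derivative_subst hP, derivative_X] at h1
  set D := d⁄dX ℚ y with hD
  have hs : D.subst (X * g : PowerSeries ℚ) = (X * g) ^ (n+1) * (mk fun i => coeff (i + (n + 1)) D).subst (X * g)
     + ∑ k ∈ Finset.range (n+1), C (coeff k D) * (X * g) ^ k := by
    conv_lhs => rw [eq_X_pow_mul_shift_add_trunc (n+1) D]
    rw [subst_add hP, subst_mul hP, subst_pow hP, subst_X hP, subst_coe hP]
    congr 1
    rw [Polynomial.aeval_eq_sum_range' (natDegree_trunc_lt D n)]
    refine Finset.sum_congr rfl fun k hk => ?_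
    rw [coeff_trunc, if_pos (by simpa using hk), smul_eq_C_mul]
  set Q := (mk fun i => coeff (i + (n + 1)) D).subst (X * g) with hQ
  have h2 : h ^ (n+1) = X ^ (n+1) * (g ^ (n+1) * Q * d⁄dX ℚ (X * g) * h ^ (n+1))
      + ∑ k ∈ Finset.range (n+1), C (coeff k D) * (X ^ k * (d⁄dX ℚ (X * g) * h ^ (n - k + 1))) := by
    calc h ^ (n+1) = (D.subst (X * g : PowerSeries ℚ) * d⁄dX ℚ (X * g)) * h ^ (n+1) := by rw [h1, one_mul]
      _ = _ := by
        rw [hs, add_mul, add_mul, Finset.sum_mul, Finset.sum_mul]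
        congr 1
        · rw [mul_pow]; ring
        · refine Finset.sum_congr rfl fun k hk => ?_
          have hk' : k ≤ n := by simpa [Nat.lt_succ_iff] using hk
          have : n + 1 = k + (n - k + 1) := by omega
          conv_lhs => rw [this, pow_add, mul_pow]
          have e : g ^ k * h ^ k = 1 := by rw [← mul_pow, hgh, one_pow]
          linear_combination (C (coeff k D) * X ^ k * d⁄dX ℚ (X * g) * h ^ (n - k + 1)) * e
  rw [h2, map_add, map_sum, coeff_X_pow_mul', if_neg (by omega), zero_add,
    Finset.sum_eq_single n]
  · rw [coeff_C_mul, coeff_X_pow_mul', if_pos le_rfl, Nat.sub_self, lag_key g h hgh, if_pos rfl, hD,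
      coeff_derivative]; ring
  · intro k hk hkn
    have hk' : k ≤ n := by simpa [Nat.lt_succ_iff] using hk
    rw [coeff_C_mul, coeff_X_pow_mul', if_pos hk', lag_key g h hgh, if_neg (by omega), mul_zero]
  · simp

open PowerSeries in
lemma left_inv (P y : PowerSeries ℚ) (hP0 : constantCoeff P = 0) (hP1 : coeff 1 P = 1)
    (h0 : constantCoeff y = 0) (hy : P.subst y = (X : PowerSeries ℚ)) :
    y.subst P = (X : PowerSeries ℚ) := by
  have hu : IsUnit (coeff 1 P) := by rw [hP1]; exact isUnit_one
  have hq := subst_substInvOfIsUnit_left P hP0 hu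
  have hsy : HasSubst y := HasSubst.of_constantCoeff_zero' h0
  have hsP : HasSubst P := HasSubst.of_constantCoeff_zero' hP0
  have : y = P.substInvOfIsUnit hu := by
    have h3 : subst y (subst P (P.substInvOfIsUnit hu)) = subst y (X : PowerSeries ℚ) := by rw [hq]
    rw [subst_comp_subst_apply hsP hsy, hy, subst_X hsy, X_subst] at h3
    exact h3.symm
  rw [this, hq]

open PowerSeries in
lemma main1 (y : PowerSeries ℚ)
    (h0 : PowerSeries.constantCoeff y = 0)
    (heq : ∑ k ∈ Finset.range (3 + 1),
        (-1 : PowerSeries ℚ) ^ k * (Nat.choose 3 k : PowerSeries ℚ) * y ^ 3 ^ k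
        = PowerSeries.X) (n : ℕ) : 
    (n + 1) * coeff (n+1) y = ∑ M ∈ Finset.range (n + 1), ((n + M).choose n : ℚ) *
      coeff n ((3 * X^2 - 3 * X^8 + X^26 : PowerSeries ℚ)^M) := by
  set u : PowerSeries ℚ := 3 * X^2 - 3 * X^8 + X^26 with hu
  have hu0 : constantCoeff u = 0 := by simp [hu]
  have hsu : HasSubst u := HasSubst.of_constantCoeff_zero' hu0
  have hsy : HasSubst y := HasSubst.of_constantCoeff_zero' h0
  have hgi : (1 - u) * (1 - u)⁻¹ = 1 := PowerSeries.mul_inv_cancel _ (by simp [hu0])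
  have hy : (X * (1 - u)).subst y = (X : PowerSeries ℚ) := by
    rw [← coe_substAlgHom hsy]
    refine Eq.trans ?_ heq
    have h3 : substAlgHom hsy (3 : PowerSeries ℚ) = 3 := map_ofNat _ 3
    simp only [h3, hu, map_mul, map_sub, map_add, map_pow, substAlgHom_X, map_one]
    simp [Finset.sum_range_succ, Nat.choose]
    ring
  have hc1 : coeff 1 (X * (1 - u)) = 1 := by
    rw [show (1:ℕ) = 0 + 1 from rfl, coeff_succ_X_mul]; simp [hu0]
  rw [← lag (1 - u) (1 - u)⁻¹ y hgi (left_inv _ y (by simp) hc1 h0 hy) n]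
  have hm := congrArg (subst u) (mk_add_choose_mul_one_sub_pow_eq_one ℚ n)
  rw [← coe_substAlgHom hsu] at hm
  simp only [map_mul, map_pow, map_sub, map_one, substAlgHom_X] at hm
  rw [coe_substAlgHom hsu] at hm
  have hi : (1 - u)⁻¹ ^ (n+1) = subst u (mk fun k ↦ (Nat.choose (n + k) n : ℚ)) := by
    have e : (1 - u) ^ (n+1) * (1 - u)⁻¹ ^ (n+1) = 1 := by rw [← mul_pow, hgi, one_pow]
    linear_combination -((1 - u)⁻¹ ^ (n+1)) * hm + subst u (mk fun k ↦ (Nat.choose (n + k) n : ℚ)) * e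
  rw [hi, coeff_subst' hsu, finsum_eq_sum_of_support_subset (s := Finset.range (n+1))]
  · simp
  · intro k hk
    simp only [Function.mem_support] at hk
    by_contra hkn
    apply hk
    have hkn' : n < k := by simpa using hkn
    obtain ⟨v, hv⟩ := X_dvd_iff.mpr hu0
    rw [hv, mul_pow, coeff_X_pow_mul', if_neg (by omega), smul_zero]

open PowerSeries in
lemma coeff_u (M m : ℕ) : coeff (2 * m) ((3 * X^2 - 3 * X^8 + X^26 : PowerSeries ℚ)^M) =
    ∑ j ∈ Finset.range (M + 1), ∑ i ∈ Finset.range (M - j + 1),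
      if m = 13 * j + 4 * i + (M - j - i) then
        ((M.choose j : ℚ) * ((M - j).choose i : ℚ) * (-3) ^ i * 3 ^ (M - j - i)) else 0 := by
  have e : (3 * X^2 - 3 * X^8 + X^26 : PowerSeries ℚ)^M =
    ∑ j ∈ Finset.range (M + 1), ∑ i ∈ Finset.range (M - j + 1),
      C ((M.choose j : ℚ) * ((M - j).choose i : ℚ) * (-3) ^ i * 3 ^ (M - j - i)) *
        X ^ (2 * (13 * j + 4 * i + (M - j - i))) := by
    rw [show (3 * X^2 - 3 * X^8 + X^26 : PowerSeries ℚ) = X^26 + (-3 * X^8 + 3 * X^2) by ring,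
      add_pow]
    refine Finset.sum_congr rfl fun j _ => ?_
    rw [add_pow, Finset.mul_sum, Finset.sum_mul]
    refine Finset.sum_congr rfl fun i _ => ?_
    have c3 : (C (3:ℚ) : PowerSeries ℚ) = 3 := map_ofNat _ 3
    simp only [map_mul, map_pow, map_neg, map_natCast, c3]
    ring
  rw [e, map_sum]
  refine Finset.sum_congr rfl fun j _ => ?_
  rw [map_sum]
  refine Finset.sum_congr rfl fun i _ => ?_
  rw [coeff_C_mul, coeff_X_pow]
  by_cases h : m = 13 * j + 4 * i + (M - j - i)
  · rw [if_pos h, if_pos (by omega), mul_one]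
  · rw [if_neg h, if_neg (by omega), mul_zero]

lemma reindex (m : ℕ) (F : ℕ → ℕ → ℕ → ℚ) :
    ∑ M ∈ Finset.range (2 * m + 1), ∑ j ∈ Finset.range (M + 1), ∑ i ∈ Finset.range (M - j + 1),
      (if m = 13 * j + 4 * i + (M - j - i) then F M j i else 0) =
    ∑ j ∈ Finset.range (m / 13 + 1), ∑ i ∈ Finset.range ((m - 13 * j) / 4 + 1),
      F (m - 3 * i - 12 * j) j i := by
  simp only [Finset.sum_sigma']
  symm
  refine Finset.sum_of_injOn (fun x => ⟨m - 3 * x.2 - 12 * x.1, x.1, x.2⟩) ?_ ?_ ?_ ?_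
  · rintro ⟨j, i⟩ _ ⟨j', i'⟩ _ h
    simp only [Sigma.mk.injEq, heq_eq_eq] at h
    simp [h]
  · rintro ⟨j, i⟩ h
    simp only [Finset.coe_sigma, Set.mem_sigma_iff, Finset.coe_range, Set.mem_Iio] at h ⊢
    omega
  · rintro ⟨M, j, i⟩ h h'
    simp only [Finset.mem_sigma, Finset.mem_range] at h
    dsimp only
    rw [if_neg]
    intro hm
    apply h'
    refine ⟨⟨j, i⟩, ?_, ?_⟩
    · simp only [Finset.coe_sigma, Set.mem_sigma_iff, Finset.coe_range, Set.mem_Iio]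
      omega
    · dsimp only
      rw [show m - 3 * i - 12 * j = M by omega]
  · rintro ⟨j, i⟩ h
    simp only [Finset.mem_sigma, Finset.mem_range] at h
    dsimp only
    rw [if_pos (by omega)]


/-- For all odd `n ≥ 1`, writing `m = (n-1)/2`,
`C_{3,3}(n) = (1/n) ⬝ ∑_{j=0}^{⌊m/13⌋} ∑_{i=0}^{⌊(m-13j)/4⌋}
  multinomial(3(m - i - 4j); n-1, m - 4i - 13j, i, j) (-1)^i 3^{m - 3i - 13j}`,
where `C_{3,3}(n)` is the coefficient of `x^n` in the unique power series `y` with zero constant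
term satisfying `∑_{k=0}^{3} (-1)^k C(3,k) y^{3^k} = x`, and
`multinomial(M; a,b,c,e) = M!/(a! b! c! e!)` for `M = a + b + c + e`. -/
theorem statement_5
    (y : PowerSeries ℚ)
    (h0 : PowerSeries.constantCoeff y = 0)
    (heq : ∑ k ∈ Finset.range (3 + 1),
        (-1 : PowerSeries ℚ) ^ k * (Nat.choose 3 k : PowerSeries ℚ) * y ^ 3 ^ k
        = PowerSeries.X)
    (n : ℕ) (hn : 1 ≤ n) (hodd : Odd n) (m : ℕ) (hm : m = (n - 1) / 2) :
    PowerSeries.coeff n y =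
      (1 / (n : ℚ)) *
        ∑ j ∈ Finset.range (m / 13 + 1),
          ∑ i ∈ Finset.range ((m - 13 * j) / 4 + 1),
            ((Nat.factorial (3 * (m - i - 4 * j)) : ℚ) /
                ((Nat.factorial (n - 1) : ℚ) * (Nat.factorial (m - 4 * i - 13 * j) : ℚ) *
                  (Nat.factorial i : ℚ) * (Nat.factorial j : ℚ))) *
              (-1 : ℚ) ^ i * (3 : ℚ) ^ (m - 3 * i - 13 * j) := by
  obtain ⟨k, hk⟩ := hodd
  obtain rfl : m = k := by omega
  subst hk
  have h := main1 y h0 heq (2 * m)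
  simp only [coeff_u, Finset.mul_sum, mul_ite, mul_zero] at h
  rw [reindex m (fun M j i => ((2 * m + M).choose (2 * m) : ℚ) *
    ((M.choose j : ℚ) * ((M - j).choose i : ℚ) * (-3) ^ i * 3 ^ (M - j - i)))] at h
  have hne : ((2 * m + 1 : ℕ) : ℚ) ≠ 0 := by positivity
  rw [one_div, eq_inv_mul_iff_mul_eq₀ hne]
  push_cast at h ⊢
  rw [h]
  refine Finset.sum_congr rfl fun j hj => Finset.sum_congr rfl fun i hi => ?_
  simp only [Finset.mem_range] at hi hj
  obtain ⟨a, ha⟩ : ∃ a, m = a + 4 * i + 13 * j := ⟨m - 4 * i - 13 * j, by omega⟩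
  have e1 : m - 3 * i - 12 * j = a + i + j := by omega
  have e2 : m - 4 * i - 13 * j = a := by omega
  have e3 : m - 3 * i - 13 * j = a + i := by omega
  have e4 : 3 * (m - i - 4 * j) = 2 * m + (a + i + j) := by omega
  rw [e1, e2, e3, e4, Nat.add_sub_cancel, Nat.add_sub_cancel, Nat.cast_add_choose,
    add_comm (a + i) j, Nat.cast_add_choose, add_comm a i, Nat.cast_add_choose,
    show (-3 : ℚ) ^ i = (-1) ^ i * 3 ^ i by rw [← mul_pow]; norm_num, pow_add]
  have f1 : ((2 * m).factorial : ℚ) ≠ 0 := by positivity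
  have f2 : ((j + (i + a)).factorial : ℚ) ≠ 0 := by positivity
  have f3 : ((i + a).factorial : ℚ) ≠ 0 := by positivity
  field_simp
end

section
/- For all integers d ≥ 1, p ≥ 2, and n ≥ 1, if n is not congruent to 1 modulo p−1 then C_{d,p}(n) = 0. (Equivalently, the power series y_{d,p} is (p−1)-periodic.) -/
theorem aux_pow (q : ℕ) (y : PowerSeries ℚ) (h0 : PowerSeries.constantCoeff y = 0)
    (n : ℕ) (hmod : ¬ n ≡ 1 [MOD q])
    (ih : ∀ m < n, ¬ m ≡ 1 [MOD q] → PowerSeries.coeff m y = 0)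
    (k : ℕ) (hk : 2 ≤ k) (hkq : k ≡ 1 [MOD q]) : PowerSeries.coeff n (y ^ k) = 0 := by
  rw [PowerSeries.coeff_pow]
  refine Finset.sum_eq_zero fun l hl => ?_
  rw [Finset.mem_finsuppAntidiag] at hl
  by_contra hne
  rw [← ne_eq, Finset.prod_ne_zero_iff] at hne
  have hpos : ∀ i ∈ Finset.range k, 1 ≤ l i := by
    intro i hi
    by_contra hc
    have h : l i = 0 := by omega
    apply hne i hi
    rw [h, PowerSeries.coeff_zero_eq_constantCoeff_apply, h0]
  have hlt : ∀ i ∈ Finset.range k, l i < n := by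
    intro i hi
    have hj : ∃ j ∈ Finset.range k, j ≠ i := by
      by_cases h : i = 0
      · exact ⟨1, by simp; omega, by omega⟩
      · exact ⟨0, by simp; omega, by omega⟩
    obtain ⟨j, hj, hji⟩ := hj
    have h1 := Finset.add_sum_erase (Finset.range k) (fun i => l i) hi
    have h2 := Finset.single_le_sum (s := (Finset.range k).erase i) (f := fun i => l i)
      (fun _ _ => Nat.zero_le _) (Finset.mem_erase.2 ⟨hji, hj⟩)
    have h3 := hpos j hj
    have h4 : ∑ i ∈ Finset.range k, l i = n := hl.1
    omega
  have hm : ∀ i ∈ Finset.range k, l i ≡ 1 [MOD q] := by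
    intro i hi
    by_contra hc
    exact hne i hi (ih _ (hlt i hi) hc)
  apply hmod
  have h4 : ∑ i ∈ Finset.range k, l i = n := hl.1
  rw [← h4]
  have h5 : ∑ i ∈ Finset.range k, l i ≡ ∑ i ∈ Finset.range k, 1 [MOD q] := by
    simp only [← ZMod.natCast_eq_natCast_iff] at hm ⊢
    push_cast
    exact Finset.sum_congr rfl (fun i hi => by simpa using hm i hi)
  refine h5.trans ?_
  simpa using hkq


/-- For all `d ≥ 1`, `p ≥ 2`, `n ≥ 1`: if `n` is not congruent to `1` modulo
`p - 1`, then `C_{d,p}(n) = 0`, where `C_{d,p}(n)` is the coefficient of `x^n` in the unique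
power series `y` with zero constant term satisfying `∑_{k=0}^{d} (-1)^k C(d,k) y^{p^k} = x`.
(Equivalently, `y` is `(p-1)`-periodic.) -/
theorem statement_6 (d p : ℕ) (hd : 1 ≤ d) (hp : 2 ≤ p)
    (y : PowerSeries ℚ)
    (h0 : PowerSeries.constantCoeff y = 0)
    (heq : ∑ k ∈ Finset.range (d + 1),
        (-1 : PowerSeries ℚ) ^ k * (d.choose k : PowerSeries ℚ) * y ^ p ^ k
        = PowerSeries.X)
    (n : ℕ) (hn : 1 ≤ n) (hmod : ¬ n ≡ 1 [MOD p - 1]) :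
    PowerSeries.coeff n y = 0 := by
  clear hn
  induction n using Nat.strong_induction_on with
  | _ n ih =>
  have hp1 : p ≡ 1 [MOD p - 1] := by
    have h : p = (p - 1) + 1 := by omega
    conv_lhs => rw [h]
    simp [Nat.ModEq]
  have h := congrArg (PowerSeries.coeff n) heq
  have hn1 : n ≠ 1 := by rintro rfl; exact hmod rfl
  rw [PowerSeries.coeff_X, if_neg hn1, map_sum, Finset.sum_range_succ',
    Finset.sum_eq_zero] at h
  · simpa using h
  · intro k _
    have hc : (-1 : PowerSeries ℚ) ^ (k + 1) * (d.choose (k + 1) : PowerSeries ℚ)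
        = PowerSeries.C ((-1) ^ (k + 1) * (d.choose (k + 1) : ℚ)) := by simp
    rw [hc, PowerSeries.coeff_C_mul, aux_pow (p - 1) y h0 n hmod ih, mul_zero]
    · calc 2 ≤ p := hp
        _ ≤ p ^ (k + 1) := Nat.le_self_pow (by omega) p
    · simpa using hp1.pow (k + 1)
end

section
/- Fix integers d ≥ 1 and p ≥ 2, and let s > 0 be the smallest positive real number with q_{d,p}'(s) = 0. Then, as n → ∞ along integers n ≡ 1 (mod p−1), C_{d,p}(n) ∼ (p−1)/√(−2π·q_{d,p}''(s)) · n^{−3/2} · q_{d,p}(s)^{1/2 − n}; that is, the ratio C_{d,p}(n) · n^{3/2} · q_{d,p}(s)^{n − 1/2} · √(−2π·q_{d,p}''(s)) / (p−1) tends to 1 along this arithmetic progression. -/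
noncomputable section
namespace S9

/-! ### Power series with natural coefficients, summable on a closed disc -/

def Sm (t : ℝ) (a : PowerSeries ℕ) : Prop :=
  Summable (fun n => ((PowerSeries.coeff n a : ℕ) : ℝ) * t ^ n)

def ev (a : PowerSeries ℕ) (z : ℂ) : ℂ := ∑' n, ((PowerSeries.coeff n a : ℕ) : ℂ) * z ^ n

lemma Sm.norm {t : ℝ} {a : PowerSeries ℕ} (h : Sm t a) {z : ℂ} (hz : ‖z‖ ≤ t) :
    Summable (fun n => ‖((PowerSeries.coeff n a : ℕ) : ℂ) * z ^ n‖) := by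
  refine Summable.of_nonneg_of_le (fun n => norm_nonneg _) (fun n => ?_) h
  simp only [norm_mul, norm_pow, Complex.norm_natCast]
  gcongr

lemma Sm.norm_ev_le {t : ℝ} {a : PowerSeries ℕ} (h : Sm t a) {z : ℂ} (hz : ‖z‖ ≤ t) :
    ‖ev a z‖ ≤ ∑' n, ((PowerSeries.coeff n a : ℕ) : ℝ) * t ^ n := by
  refine (norm_tsum_le_tsum_norm (h.norm hz)).trans ?_
  refine Summable.tsum_le_tsum (fun n => ?_) (h.norm hz) h
  simp only [norm_mul, norm_pow, Complex.norm_natCast]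
  gcongr

lemma ev_ofReal (t : ℝ) (a : PowerSeries ℕ) :
    ev a (t : ℂ) = ((∑' n, ((PowerSeries.coeff n a : ℕ) : ℝ) * t ^ n : ℝ) : ℂ) := by
  unfold ev
  push_cast
  rfl

lemma ev_mul {t : ℝ} {a b : PowerSeries ℕ} (ha : Sm t a) (hb : Sm t b) {z : ℂ} (hz : ‖z‖ ≤ t) :
    ev (a * b) z = ev a z * ev b z := by
  unfold ev
  rw [tsum_mul_tsum_eq_tsum_sum_antidiagonal_of_summable_norm (ha.norm hz) (hb.norm hz)]
  congr 1
  ext n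
  rw [PowerSeries.coeff_mul]
  push_cast
  rw [Finset.sum_mul]
  refine Finset.sum_congr rfl fun x hx => ?_
  rw [← Finset.HasAntidiagonal.mem_antidiagonal.1 hx]
  ring

lemma Sm.mul {t : ℝ} (ht : 0 ≤ t) {a b : PowerSeries ℕ} (ha : Sm t a) (hb : Sm t b) :
    Sm t (a * b) := by
  have h1 : Summable (fun n => ‖((PowerSeries.coeff n a : ℕ) : ℝ) * t ^ n‖) := Summable.norm ha
  have h2 : Summable (fun n => ‖((PowerSeries.coeff n b : ℕ) : ℝ) * t ^ n‖) := Summable.norm hb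
  refine (summable_norm_sum_mul_antidiagonal_of_summable_norm h1 h2).congr fun n => ?_
  rw [Real.norm_of_nonneg (by positivity), PowerSeries.coeff_mul]
  push_cast
  rw [Finset.sum_mul]
  refine Finset.sum_congr rfl fun x hx => ?_
  rw [← Finset.HasAntidiagonal.mem_antidiagonal.1 hx]
  ring

lemma Sm.add {t : ℝ} {a b : PowerSeries ℕ} (ha : Sm t a) (hb : Sm t b) :
    Sm t (a + b) := by
  refine (Summable.add ha hb).congr fun n => ?_
  simp [add_mul]

lemma ev_add {t : ℝ} {a b : PowerSeries ℕ} (ha : Sm t a) (hb : Sm t b) {z : ℂ} (hz : ‖z‖ ≤ t) :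
    ev (a + b) z = ev a z + ev b z := by
  unfold ev
  rw [← Summable.tsum_add (ha.norm hz).of_norm (hb.norm hz).of_norm]
  congr 1
  ext n
  simp [add_mul]

lemma ev_X_pow (k : ℕ) (z : ℂ) : ev (PowerSeries.X ^ k) z = z ^ k := by
  unfold ev
  rw [tsum_eq_single k]
  · simp
  · intro n hn
    simp [PowerSeries.coeff_X_pow, hn]

lemma Sm_X_pow (k : ℕ) (t : ℝ) : Sm t (PowerSeries.X ^ k) := by
  refine summable_of_ne_finset_zero (s := {k}) fun n hn => ?_
  simp only [Finset.mem_singleton] at hn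
  simp [PowerSeries.coeff_X_pow, hn]

lemma Sm_one (t : ℝ) : Sm t 1 := by simpa using Sm_X_pow 0 t
lemma ev_one (z : ℂ) : ev 1 z = 1 := by simpa using ev_X_pow 0 z

lemma Sm.pow {t : ℝ} (ht : 0 ≤ t) {a : PowerSeries ℕ} (ha : Sm t a) (k : ℕ) :
    Sm t (a ^ k) := by
  induction k with
  | zero => simpa using Sm_one t
  | succ k ih => rw [pow_succ]; exact ih.mul ht ha

lemma ev_pow {t : ℝ} (ht : 0 ≤ t) {a : PowerSeries ℕ} (ha : Sm t a) (k : ℕ) {z : ℂ}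
    (hz : ‖z‖ ≤ t) : ev (a ^ k) z = ev a z ^ k := by
  induction k with
  | zero => simpa using ev_one z
  | succ k ih => rw [pow_succ, ev_mul (ha.pow ht k) ha hz, ih, pow_succ]

lemma coeff_pow_zero {a : PowerSeries ℕ} (h0 : PowerSeries.coeff 0 a = 0) {n k : ℕ} (h : n < k) :
    PowerSeries.coeff n (a ^ k) = 0 := by
  have : (PowerSeries.X : PowerSeries ℕ) ∣ a := by
    rw [PowerSeries.X_dvd_iff]; simpa using h0
  exact PowerSeries.X_pow_dvd_iff.1 (pow_dvd_pow_of_dvd this k) n h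

lemma exists_geom {a : PowerSeries ℕ} (h0 : PowerSeries.coeff 0 a = 0) :
    ∃ b : PowerSeries ℕ, b = 1 + a * b := by
  refine ⟨PowerSeries.mk fun n => PowerSeries.coeff n (∑ j ∈ Finset.range (n + 1), a ^ j), ?_⟩
  have key : ∀ n k, k ≤ n → PowerSeries.coeff k (∑ j ∈ Finset.range (k + 1), a ^ j) =
      PowerSeries.coeff k (∑ j ∈ Finset.range (n + 1), a ^ j) := by
    intro n k hk
    rw [map_sum, map_sum]
    refine Finset.sum_subset (Finset.range_mono (by omega)) fun j _ hj => ?_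
    simp only [Finset.mem_range, not_lt] at hj
    exact coeff_pow_zero h0 (by omega)
  ext n
  rw [map_add, PowerSeries.coeff_mul, PowerSeries.coeff_mk]
  have : ∑ x ∈ Finset.HasAntidiagonal.antidiagonal n, PowerSeries.coeff x.1 a * PowerSeries.coeff x.2
      (PowerSeries.mk fun n => PowerSeries.coeff n (∑ j ∈ Finset.range (n + 1), a ^ j)) =
      PowerSeries.coeff n (a * ∑ j ∈ Finset.range (n + 1), a ^ j) := by
    rw [PowerSeries.coeff_mul]
    refine Finset.sum_congr rfl fun x hx => ?_
    rw [PowerSeries.coeff_mk, key n x.2]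
    have := Finset.HasAntidiagonal.mem_antidiagonal.1 hx
    omega
  rw [this, key (n + 1) n (by omega), Finset.sum_range_succ' _ (n + 1), Finset.mul_sum]
  simp only [pow_succ', pow_zero, map_add]
  rw [add_comm]

lemma Sm.geom {t : ℝ} (ht : 0 ≤ t) {a b : PowerSeries ℕ} (ha : Sm t a)
    (hlt : ∑' n, ((PowerSeries.coeff n a : ℕ) : ℝ) * t ^ n < 1)
    (hb : b = 1 + a * b) (h0 : PowerSeries.coeff 0 a = 0) : Sm t b := by
  set A := ∑' n, ((PowerSeries.coeff n a : ℕ) : ℝ) * t ^ n with hA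
  have hbound : ∀ N, ∑ n ∈ Finset.range N, ((PowerSeries.coeff n b : ℕ) : ℝ) * t ^ n ≤ 1 / (1 - A) := by
    intro N
    set B := ∑ n ∈ Finset.range N, ((PowerSeries.coeff n b : ℕ) : ℝ) * t ^ n with hB
    have hB0 : 0 ≤ B := Finset.sum_nonneg fun n _ => by positivity
    have hle : B ≤ 1 + A * B := by
      have e : B = ∑ n ∈ Finset.range N, (((PowerSeries.coeff n (1 : PowerSeries ℕ) : ℕ) : ℝ) * t ^ n) +
          ∑ n ∈ Finset.range N, ∑ x ∈ Finset.HasAntidiagonal.antidiagonal n,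
            (((PowerSeries.coeff x.1 a : ℕ) : ℝ) * t ^ x.1) * (((PowerSeries.coeff x.2 b : ℕ) : ℝ) * t ^ x.2) := by
        rw [hB, ← Finset.sum_add_distrib]
        refine Finset.sum_congr rfl fun n _ => ?_
        conv_lhs => rw [hb]
        rw [map_add, PowerSeries.coeff_mul]
        push_cast
        rw [add_mul, Finset.sum_mul]
        congr 1
        refine Finset.sum_congr rfl fun x hx => ?_
        rw [← Finset.HasAntidiagonal.mem_antidiagonal.1 hx]
        ring
      refine e.le.trans (add_le_add ?_ ?_)
      · have := (Sm_one t).sum_le_tsum (Finset.range N) (fun n _ => by positivity)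
        refine this.trans (le_of_eq ?_)
        have := ev_ofReal t 1
        rw [ev_one] at this
        exact_mod_cast this.symm
      · have h1 : ∑ n ∈ Finset.range N, ∑ x ∈ Finset.HasAntidiagonal.antidiagonal n,
            (((PowerSeries.coeff x.1 a : ℕ) : ℝ) * t ^ x.1) * (((PowerSeries.coeff x.2 b : ℕ) : ℝ) * t ^ x.2)
            ≤ (∑ i ∈ Finset.range N, ((PowerSeries.coeff i a : ℕ) : ℝ) * t ^ i) * B := by
          rw [hB, Finset.sum_mul_sum, ← Finset.sum_product', Finset.sum_sigma']
          rw [← Finset.sum_image (s := (Finset.range N).sigma fun n => Finset.HasAntidiagonal.antidiagonal n)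
            (g := fun x : (_ : ℕ) × (ℕ × ℕ) => x.2)
            (f := fun x : ℕ × ℕ => (((PowerSeries.coeff x.1 a : ℕ) : ℝ) * t ^ x.1) *
              (((PowerSeries.coeff x.2 b : ℕ) : ℝ) * t ^ x.2))]
          · refine Finset.sum_le_sum_of_subset_of_nonneg ?_ fun x _ _ => by positivity
            intro x hx
            simp only [Finset.mem_image, Finset.mem_sigma, Finset.mem_range,
              Finset.HasAntidiagonal.mem_antidiagonal] at hx
            obtain ⟨y, ⟨h1, h2⟩, rfl⟩ := hx
            simp only [Finset.mem_product, Finset.mem_range]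
            omega
          · rintro ⟨n, x⟩ hx ⟨m, y⟩ hy h
            simp at hx hy h
            obtain ⟨_, rfl⟩ := hx
            obtain ⟨_, rfl⟩ := hy
            subst h
            rfl
        refine h1.trans (mul_le_mul_of_nonneg_right ?_ hB0)
        exact ha.sum_le_tsum _ fun n _ => by positivity
    rw [le_div_iff₀ (by linarith)]
    nlinarith
  exact summable_of_sum_range_le (fun n => by positivity) hbound

lemma ev_geom {t : ℝ} {a b : PowerSeries ℕ} (ht : 0 ≤ t) (ha : Sm t a) (hbs : Sm t b)
    (hb : b = 1 + a * b) {z : ℂ} (hz : ‖z‖ ≤ t) : ev b z * (1 - ev a z) = 1 := by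
  have h1 := ev_add (Sm_one t) (ha.mul ht hbs) hz
  rw [← hb, ev_one, ev_mul ha hbs hz] at h1
  linear_combination h1

/-- Frobenius-type comparison: `a(x)^p - a(x^p)` has nonnegative coefficients. -/
lemma coeff_le_pow (a : PowerSeries ℕ) (m k : ℕ) :
    (PowerSeries.coeff m a) ^ k ≤ PowerSeries.coeff (k * m) (a ^ k) := by
  induction k with
  | zero => simp
  | succ k ih =>
    rw [pow_succ, pow_succ, PowerSeries.coeff_mul]
    refine le_trans ?_ (Finset.single_le_sum
      (f := fun x : ℕ × ℕ => PowerSeries.coeff x.1 (a ^ k) * PowerSeries.coeff x.2 a)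
      (fun _ _ => Nat.zero_le _) (a := (k * m, m)) ?_)
    · exact Nat.mul_le_mul_right _ ih
    · simp; ring

lemma frob {t : ℝ} (ht : 0 ≤ t) (ht1 : t ≤ 1) {p : ℕ} (hp : 1 ≤ p) {a : PowerSeries ℕ}
    (ha : Sm t a) : ∃ c : PowerSeries ℕ, Sm t c ∧
      ∀ z : ℂ, ‖z‖ ≤ t → ev c z = ev a z ^ p - ev a (z ^ p) := by
  set e : ℕ → ℕ := fun n => if p ∣ n then PowerSeries.coeff (n / p) a else 0 with he
  have hle : ∀ n, e n ≤ PowerSeries.coeff n (a ^ p) := by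
    intro n
    simp only [he]
    split_ifs with h
    · obtain ⟨m, rfl⟩ := h
      rw [Nat.mul_div_cancel_left _ (by omega)]
      exact (Nat.le_self_pow (by omega) _).trans (coeff_le_pow a m p)
    · exact Nat.zero_le _
  refine ⟨PowerSeries.mk fun n => PowerSeries.coeff n (a ^ p) - e n, ?_, ?_⟩
  · refine Summable.of_nonneg_of_le (fun n => by positivity) (fun n => ?_) (ha.pow ht p)
    rw [PowerSeries.coeff_mk]
    gcongr
    omega
  · intro z hz
    have hzp : ‖z ^ p‖ ≤ t := by
      rw [norm_pow]
      exact (pow_le_of_le_one (norm_nonneg _) (hz.trans ht1) (by omega)).trans hz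
    have inj : Function.Injective (fun m : ℕ => p * m) :=
      fun x y h => Nat.eq_of_mul_eq_mul_left (by omega) h
    have hs : HasSum (fun n => (e n : ℂ) * z ^ n) (ev a (z ^ p)) := by
      have : HasSum ((fun n => (e n : ℂ) * z ^ n) ∘ (fun m : ℕ => p * m)) (ev a (z ^ p)) := by
        convert! (ha.norm hzp).of_norm.hasSum using 1
        ext m
        simp only [Function.comp, he]
        rw [if_pos (Dvd.intro _ rfl), Nat.mul_div_cancel_left _ (by omega), pow_mul]
      refine (inj.hasSum_iff ?_).1 this
      intro n hn
      simp only [he]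
      rw [if_neg]
      · simp
      · rintro ⟨m, rfl⟩
        exact hn ⟨m, rfl⟩
    have h2 : HasSum (fun n => ((PowerSeries.coeff n (a ^ p) : ℕ) : ℂ) * z ^ n) (ev a z ^ p) := by
      rw [← ev_pow ht ha p hz]
      exact ((ha.pow ht p).norm hz).of_norm.hasSum
    refine (HasSum.tsum_eq ?_)
    convert! h2.sub hs using 1
    ext n
    rw [PowerSeries.coeff_mk, Nat.cast_sub (hle n), sub_mul]


/-! ### The polynomials -/

open Polynomial in
def P (p : ℕ) : ℕ → ℤ[X]
  | 0 => X
  | (d + 1) => P p d - expand ℤ p (P p d)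

open Polynomial in
lemma P_eq (p d : ℕ) : P p d = ∑ k ∈ Finset.range (d + 1), (-1) ^ k * (d.choose k : ℤ[X]) * X ^ p ^ k := by
  induction d with
  | zero => simp [P]
  | succ d ih =>
    rw [P, ih, map_sum]
    have e1 : ∀ k, expand ℤ p ((-1) ^ k * (d.choose k : ℤ[X]) * X ^ p ^ k) =
        (-1) ^ k * (d.choose k : ℤ[X]) * X ^ p ^ (k + 1) := by
      intro k
      simp only [map_mul, map_pow, map_neg, map_one, expand_X, map_natCast]
      rw [← pow_mul, pow_succ']
    simp only [e1]
    rw [Finset.sum_range_succ' _ (d + 1)]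
    have e2 : ∑ k ∈ Finset.range (d + 1), (-1) ^ k * (d.choose k : ℤ[X]) * X ^ p ^ k =
      ∑ k ∈ Finset.range (d + 1), (-1) ^ (k + 1) * (d.choose (k + 1) : ℤ[X]) * X ^ p ^ (k + 1) + X := by
      rw [Finset.sum_range_succ', Finset.sum_range_succ _ d]
      simp
    rw [e2]
    simp only [Nat.choose_succ_succ]
    push_cast
    simp only [mul_add, add_mul, Finset.sum_add_distrib]
    simp [pow_succ]
    ring

def qc (p d : ℕ) (z : ℂ) : ℂ := Polynomial.aeval z (P p d)
def qr (p d : ℕ) (x : ℝ) : ℝ := Polynomial.aeval x (P p d)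

lemma qc_zero (p : ℕ) (z : ℂ) : qc p 0 z = z := by simp [qc, P]
lemma qr_zero (p : ℕ) (z : ℝ) : qr p 0 z = z := by simp [qr, P]
lemma qc_succ (p d : ℕ) (z : ℂ) : qc p (d + 1) z = qc p d z - qc p d (z ^ p) := by
  simp [qc, P, Polynomial.expand_aeval]
lemma qr_succ (p d : ℕ) (z : ℝ) : qr p (d + 1) z = qr p d z - qr p d (z ^ p) := by
  simp [qr, P, Polynomial.expand_aeval]
lemma qc_ofReal (p d : ℕ) (x : ℝ) : qc p d (x : ℂ) = (qr p d x : ℂ) := by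
  induction d generalizing x with
  | zero => simp [qc_zero, qr_zero]
  | succ d ih => rw [qc_succ, qr_succ, ih, ← Complex.ofReal_pow, ih]; push_cast; rfl
lemma qc_at_zero (p : ℕ) (hp : 2 ≤ p) (d : ℕ) : qc p d 0 = 0 := by
  induction d with
  | zero => simp [qc_zero]
  | succ d ih => rw [qc_succ, zero_pow (by omega), ih]; simp
lemma qr_at_zero (p : ℕ) (hp : 2 ≤ p) (d : ℕ) : qr p d 0 = 0 := by
  induction d with
  | zero => simp [qr_zero]
  | succ d ih => rw [qr_succ, zero_pow (by omega), ih]; simp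
lemma qr_at_one (p : ℕ) (d : ℕ) (hd : 1 ≤ d) : qr p d 1 = 0 := by
  obtain ⟨d, rfl⟩ := Nat.exists_eq_add_of_le' hd
  simp [qr_succ]
lemma P_coeff_one (p : ℕ) (hp : 2 ≤ p) (d : ℕ) : (P p d).coeff 1 = 1 := by
  induction d with
  | zero => simp [P]
  | succ d ih =>
    rw [P, Polynomial.coeff_sub, ih, Polynomial.coeff_expand (by omega), if_neg]
    · simp
    · intro h; have := Nat.le_of_dvd one_pos h; omega

/-- rotation symmetry -/
lemma qc_rot (p : ℕ) (hp : 2 ≤ p) (d : ℕ) (w z : ℂ) (hw : w ^ (p - 1) = 1) :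
    qc p d (w * z) = w * qc p d z := by
  have hwp : w ^ p = w := by
    obtain ⟨k, rfl⟩ : ∃ k, p = k + 1 := ⟨p - 1, by omega⟩
    rw [pow_succ]; simp at hw; rw [hw, one_mul]
  induction d generalizing z with
  | zero => simp [qc_zero]
  | succ d ih => rw [qc_succ, qc_succ, ih, mul_pow, hwp, ih]; ring

lemma Sm_geomsum {t : ℝ} (ht : 0 ≤ t) {a : PowerSeries ℕ} (ha : Sm t a) (k : ℕ) :
    ∃ g, Sm t g ∧ ∀ z : ℂ, ‖z‖ ≤ t → ev g z * (1 - ev a z) = 1 - ev a z ^ k := by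
  induction k with
  | zero => exact ⟨0, by simp [Sm, summable_zero], fun z hz => by simp [ev]⟩
  | succ k ih =>
    obtain ⟨g, hg, h⟩ := ih
    refine ⟨g + a ^ k, hg.add (ha.pow ht k), fun z hz => ?_⟩
    rw [ev_add hg (ha.pow ht k) hz, add_mul, h z hz, ev_pow ht ha k hz]
    ring

lemma main_ind {t : ℝ} (ht : 0 < t) (ht1 : t < 1) {p : ℕ} (hp : 2 ≤ p) (j : ℕ)
    (hpos : ∀ i ≤ j, 0 < qr p i t) :
    (∀ z : ℂ, z ≠ 0 → ‖z‖ ≤ t → qc p j z ≠ 0) ∧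
    ∃ a : PowerSeries ℕ, Sm t a ∧ PowerSeries.coeff 0 a = 0 ∧
      (∀ z : ℂ, ‖z‖ ≤ t → qc p j (z ^ p) / qc p j z = ev a z) ∧
      ∑' n, ((PowerSeries.coeff n a : ℕ) : ℝ) * t ^ n = qr p j (t ^ p) / qr p j t := by
  have real_of : ∀ (j : ℕ) (a : PowerSeries ℕ),
      (∀ z : ℂ, ‖z‖ ≤ t → qc p j (z ^ p) / qc p j z = ev a z) →
      ∑' n, ((PowerSeries.coeff n a : ℕ) : ℝ) * t ^ n = qr p j (t ^ p) / qr p j t := by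
    intro j a h
    have := h t (by simp [abs_of_pos ht])
    rw [ev_ofReal, ← Complex.ofReal_pow, qc_ofReal, qc_ofReal] at this
    exact_mod_cast this.symm
  have zero_of : ∀ (j : ℕ) (a : PowerSeries ℕ),
      (∀ z : ℂ, ‖z‖ ≤ t → qc p j (z ^ p) / qc p j z = ev a z) →
      PowerSeries.coeff 0 a = 0 := by
    intro j a h
    have := h 0 (by simp [ht.le])
    rw [qc_at_zero p hp, div_zero, ev, tsum_eq_single 0 (by intro n hn; simp [hn])] at this
    simpa using this.symm
  induction j with
  | zero =>
    have h : ∀ z : ℂ, ‖z‖ ≤ t → qc p 0 (z ^ p) / qc p 0 z = ev (PowerSeries.X ^ (p - 1)) z := by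
      intro z _
      rw [qc_zero, qc_zero, ev_X_pow]
      obtain ⟨k, rfl⟩ : ∃ k, p = k + 2 := ⟨p - 2, by omega⟩
      by_cases hz : z = 0
      · simp [hz]
      · field_simp; simp; ring
    exact ⟨fun z hz _ => by simpa [qc_zero] using hz, _, Sm_X_pow _ _, zero_of _ _ h, h, real_of _ _ h⟩
  | succ j ih =>
    obtain ⟨hne, a, ha, ha0, hev, hA⟩ := ih fun i hi => hpos i (by omega)
    have hA1 : ∑' n, ((PowerSeries.coeff n a : ℕ) : ℝ) * t ^ n < 1 := by
      rw [hA, div_lt_one (hpos j (by omega))]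
      have := hpos (j + 1) le_rfl
      rw [qr_succ] at this
      linarith
    have hne1 : ∀ z : ℂ, ‖z‖ ≤ t → 1 - ev a z ≠ 0 := by
      intro z hz h
      have h1 := ha.norm_ev_le hz
      rw [← sub_eq_zero.1 h] at h1
      simp at h1
      linarith
    have hne' : ∀ z : ℂ, z ≠ 0 → ‖z‖ ≤ t → qc p (j + 1) z ≠ 0 := by
      intro z hz hzt
      have : qc p (j + 1) z = qc p j z * (1 - ev a z) := by
        rw [← hev z hzt, qc_succ]
        have := hne z hz hzt
        field_simp
      rw [this]
      exact mul_ne_zero (hne z hz hzt) (hne1 z hzt)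
    obtain ⟨b, hb⟩ := exists_geom ha0
    have hbs : Sm t b := ha.geom ht.le hA1 hb ha0
    obtain ⟨c, hcs, hc⟩ := frob ht.le ht1.le (p := p) (by omega) ha
    obtain ⟨g, hgs, hg⟩ := Sm_geomsum ht.le ha p
    have hs : Sm t (g + c * b) := hgs.add (hcs.mul ht.le hbs)
    have h : ∀ z : ℂ, ‖z‖ ≤ t → qc p (j + 1) (z ^ p) / qc p (j + 1) z = ev (a * (g + c * b)) z := by
      intro z hz
      have hzp : ‖z ^ p‖ ≤ t := by
        rw [norm_pow]
        exact (pow_le_of_le_one (norm_nonneg _) (hz.trans ht1.le) (by omega)).trans hz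
      rw [ev_mul ha hs hz]
      by_cases h0 : z = 0
      · subst h0
        rw [← hev 0 hz, qc_at_zero p hp, qc_at_zero p hp]
        simp
      · have hzp0 : z ^ p ≠ 0 := pow_ne_zero _ h0
        have e1 := ev_geom ht.le ha hbs hb hz
        have e2 := hg z hz
        have e3 := hc z hz
        have e4 : ev (g + c * b) z * (1 - ev a z) = 1 - ev a (z ^ p) := by
          rw [ev_add hgs (hcs.mul ht.le hbs) hz, ev_mul hcs hbs hz, e3]
          linear_combination e2 + (ev a z ^ p - ev a (z ^ p)) * e1
        have n1 := hne1 z hz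
        rw [eq_div_of_mul_eq n1 e4]
        have n2 := hne z h0 hz
        have n3 := hne _ hzp0 hzp
        have n4 := hne' z h0 hz
        rw [← hev z hz] at n1 ⊢
        rw [← hev _ hzp, qc_succ, qc_succ]
        rw [qc_succ] at n4
        have n1' : qc p j z - qc p j (z ^ p) ≠ 0 := n4
        field_simp
    exact ⟨hne', _, ha.mul ht.le hs, zero_of _ _ h, h, real_of _ _ h⟩

lemma lower_bound {t : ℝ} (ht : 0 < t) (ht1 : t < 1) {p : ℕ} (hp : 2 ≤ p) (e : ℕ)
    (hpos : ∀ i ≤ e + 1, 0 < qr p i t) (z : ℂ) (hz : ‖z‖ = t) :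
    qr p (e + 1) t * ‖1 - z ^ (p - 1)‖ ≤ ‖qc p (e + 1) z‖ * (1 - t ^ (p - 1)) := by
  induction e with
  | zero =>
    obtain ⟨k, rfl⟩ : ∃ k, p = k + 1 := ⟨p - 1, by omega⟩
    simp only [qr_succ, qc_succ, qc_zero, qr_zero, Nat.add_sub_cancel]
    have : z - z ^ (k + 1) = z * (1 - z ^ k) := by ring
    rw [this, norm_mul, hz]
    apply le_of_eq; ring
  | succ e ih =>
    have ih := ih fun i hi => hpos i (by omega)
    obtain ⟨hne, a, ha, ha0, hev, hA⟩ := main_ind ht ht1 hp (e + 1) fun i hi => hpos i (by omega)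
    have hz0 : z ≠ 0 := by intro h; rw [h] at hz; simp at hz; linarith
    have h1 : qc p (e + 1 + 1) z = qc p (e + 1) z * (1 - ev a z) := by
      rw [← hev z hz.le, qc_succ]
      have := hne z hz0 hz.le
      field_simp
    have hp1 := hpos (e + 1) (by omega)
    have h2 : qr p (e + 1 + 1) t = qr p (e + 1) t *
        (1 - ∑' n, ((PowerSeries.coeff n a : ℕ) : ℝ) * t ^ n) := by
      rw [hA, qr_succ]
      field_simp
    have hp2 := hpos (e + 1 + 1) le_rfl
    rw [h2] at hp2
    have hp3 : 0 < 1 - ∑' n, ((PowerSeries.coeff n a : ℕ) : ℝ) * t ^ n :=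
      (pos_iff_pos_of_mul_pos hp2).1 hp1
    have h3 : 1 - ∑' n, ((PowerSeries.coeff n a : ℕ) : ℝ) * t ^ n ≤ ‖1 - ev a z‖ := by
      have h4 := norm_sub_norm_le (1 : ℂ) (ev a z)
      have h5 := ha.norm_ev_le hz.le
      simp at h4
      linarith
    rw [h1, h2, norm_mul]
    have ht' : t ^ (p - 1) < 1 := pow_lt_one₀ ht.le ht1 (by omega)
    calc _ = (qr p (e + 1) t * ‖1 - z ^ (p - 1)‖) *
        (1 - ∑' n, ((PowerSeries.coeff n a : ℕ) : ℝ) * t ^ n) := by ring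
      _ ≤ (‖qc p (e + 1) z‖ * (1 - t ^ (p - 1))) * ‖1 - ev a z‖ := by
        apply mul_le_mul ih h3 hp3.le
        exact mul_nonneg (norm_nonneg _) (by linarith)
      _ = _ := by ring


/-! ### Lagrange inversion as a contour integral -/

open Polynomial in
lemma formal_inv (f : ℚ[X]) (hf0 : f.coeff 0 = 0) (hf1 : f.coeff 1 = 1) (y : PowerSeries ℚ)
    (hy0 : PowerSeries.constantCoeff y = 0)
    (h : Polynomial.aeval y f = PowerSeries.X) (n : ℕ) :
    ∃ g : ℚ[X], (∑ k ∈ Finset.range n, C (PowerSeries.coeff (k + 1) y * (k + 1)) * f ^ k) *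
      derivative f = 1 + X ^ n * g := by
  set Y : ℚ[X] := PowerSeries.trunc (n + 1) y with hY
  have h1 : (PowerSeries.X : PowerSeries ℚ) ^ (n + 1) ∣ y - (Y : PowerSeries ℚ) := by
    rw [PowerSeries.X_pow_dvd_iff]
    intro m hm
    simp [hY, PowerSeries.coeff_trunc, hm]
  have h2 : (PowerSeries.X : PowerSeries ℚ) ^ (n + 1) ∣ ((X - f.comp Y : ℚ[X]) : PowerSeries ℚ) := by
    have e : ((X - f.comp Y : ℚ[X]) : PowerSeries ℚ) =
        aeval y f - aeval (Y : PowerSeries ℚ) f := by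
      rw [h, Polynomial.coe_sub, Polynomial.coe_X]
      congr 1
      have := Polynomial.aeval_algHom_apply (Polynomial.coeToPowerSeries.algHom (R := ℚ) ℚ) Y f
      simp [Polynomial.coeToPowerSeries.algHom_apply] at this
      rw [this]
      rfl
    rw [e]
    refine h1.trans ?_
    rw [← Polynomial.eval_map_algebraMap, ← Polynomial.eval_map_algebraMap]
    exact Polynomial.sub_dvd_eval_sub _ _ _
  have h3 : X ^ (n + 1) ∣ X - f.comp Y := by
    rw [Polynomial.X_pow_dvd_iff]
    intro m hm
    have := PowerSeries.X_pow_dvd_iff.1 h2 m hm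
    rwa [Polynomial.coeff_coe] at this
  have hXf : X ∣ f := Polynomial.X_dvd_iff.2 hf0
  set a := Y.comp f with ha
  have h4 : X ^ (n + 1) ∣ f - f.comp a := by
    obtain ⟨u, hu⟩ := h3
    have : (X - f.comp Y).comp f = (X ^ (n + 1) * u).comp f := by rw [hu]
    rw [sub_comp, X_comp, comp_assoc, mul_comp, X_pow_comp] at this
    rw [ha, this]
    exact (pow_dvd_pow_of_dvd hXf _).mul_right _
  have hXa : X ∣ a - X := by
    have h0 : Y.coeff 0 = 0 := by
      simp [hY, PowerSeries.coeff_trunc, hy0]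
    rw [Polynomial.X_dvd_iff, ha, coeff_zero_eq_eval_zero]
    simp [eval_comp, ← coeff_zero_eq_eval_zero, hf0, h0]
  obtain ⟨k, hk⟩ := Polynomial.binomExpansion (f.map (algebraMap ℚ ℚ[X])) X (a - X)
  rw [add_sub_cancel, derivative_map, eval_map_algebraMap, eval_map_algebraMap,
    eval_map_algebraMap] at hk
  have cmp : ∀ u v : ℚ[X], aeval u v = v.comp u := fun u v => rfl
  simp only [cmp, comp_X] at hk
  have h5 : X ^ (n + 1) ∣ (derivative f + k * (a - X)) * (a - X) := by
    have : (derivative f + k * (a - X)) * (a - X) = -(f - f.comp a) := by rw [hk]; ring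
    rw [this]
    exact (dvd_neg).2 h4
  have h6 : ¬ X ∣ (derivative f + k * (a - X)) := by
    intro h
    have h7 : X ∣ derivative f := by
      have := dvd_sub h (hXa.mul_left k)
      simpa using this
    rw [X_dvd_iff, coeff_derivative] at h7
    simp [hf1] at h7
  obtain ⟨g, hg⟩ := Polynomial.prime_X.pow_dvd_of_dvd_mul_left _ h6 h5
  have hd : derivative (Y.comp f - X) = derivative (X ^ (n + 1) * g) := by rw [← ha, hg]
  refine ⟨C ((n : ℚ) + 1) * g + X * derivative g, ?_⟩
  have e : (derivative Y).comp f =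
      ∑ k ∈ Finset.range n, C (PowerSeries.coeff (k + 1) y * (k + 1)) * f ^ k := by
    rw [← cmp, aeval_eq_sum_range' (n := n + 1)]
    · rw [Finset.sum_range_succ]
      rw [coeff_derivative, hY, PowerSeries.coeff_trunc, if_neg (by omega)]
      simp only [zero_mul, zero_smul, add_zero]
      refine Finset.sum_congr rfl fun k hk => ?_
      simp only [Finset.mem_range] at hk
      rw [coeff_derivative, PowerSeries.coeff_trunc, if_pos (by omega), Polynomial.smul_eq_C_mul]
    · exact lt_of_le_of_lt (natDegree_derivative_le _)
        (by have : Y.natDegree < n + 1 := PowerSeries.natDegree_trunc_lt y n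
            omega)
  rw [← e]
  rw [derivative_sub, derivative_comp, derivative_X, derivative_mul, derivative_X_pow] at hd
  simp at hd ⊢
  linear_combination hd

open Polynomial in
lemma contour (f : ℂ[X]) (hf0 : f.coeff 0 = 0) (hf1 : f.coeff 1 = 1) {t : ℝ} (ht : 0 < t)
    (hne : ∀ z : ℂ, z ≠ 0 → ‖z‖ ≤ t → f.eval z ≠ 0) (n : ℕ) (c : ℕ → ℂ) (g : ℂ[X])
    (hid : (∑ k ∈ Finset.range (n + 1), C (c k) * f ^ k) * derivative f = 1 + X ^ (n + 1) * g) :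
    ∮ z in C(0, t), ((f.eval z) ^ (n + 1))⁻¹ = 2 * Real.pi * Complex.I * c n := by
  set Q := f.divX with hQ
  have hfQ : ∀ z, f.eval z = z * Q.eval z := by
    intro z
    conv_lhs => rw [← Polynomial.X_mul_divX_add f, hf0]
    simp [hQ]
  have hQne : ∀ z : ℂ, ‖z‖ ≤ t → Q.eval z ≠ 0 := by
    intro z hz
    by_cases h : z = 0
    · rw [h, ← coeff_zero_eq_eval_zero, hQ, coeff_divX, zero_add, hf1]; exact one_ne_zero
    · have := hne z h hz
      rw [hfQ] at this
      exact right_ne_zero_of_mul this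
  have hsph : ∀ z ∈ Metric.sphere (0 : ℂ) t, z ≠ 0 ∧ ‖z‖ ≤ t := by
    intro z hz
    have : ‖z‖ = t := by simpa using hz
    exact ⟨by intro h; rw [h] at this; simp at this; linarith, this.le⟩
  have hfs : ∀ z ∈ Metric.sphere (0 : ℂ) t, f.eval z ≠ 0 := fun z hz =>
    hne z (hsph z hz).1 (hsph z hz).2
  -- analytic functions integrate to zero
  have hana : ∀ (G : ℂ[X]) (m : ℕ), ∮ z in C(0, t), G.eval z * ((Q.eval z) ^ m)⁻¹ = 0 := by
    intro G m
    have hdiff : ∀ z ∈ Metric.closedBall (0 : ℂ) t,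
        DifferentiableAt ℂ (fun z => G.eval z * ((Q.eval z) ^ m)⁻¹) z := by
      intro z hz
      have : Q.eval z ≠ 0 := hQne z (by simpa using hz)
      refine G.differentiable.differentiableAt.mul ?_
      refine DifferentiableAt.inv (Q.differentiable.differentiableAt.pow _) (pow_ne_zero _ this)
    refine Complex.circleIntegral_eq_zero_of_differentiable_on_off_countable ht.le
      Set.countable_empty (fun z hz => (hdiff z hz).continuousAt.continuousWithinAt) ?_
    intro z hz
    exact hdiff z (Metric.ball_subset_closedBall hz.1)
  have hci : ∀ (G : ℂ[X]) (m : ℕ), CircleIntegrable (fun z => G.eval z * ((f.eval z) ^ m)⁻¹) 0 t := by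
    intro G m
    refine ContinuousOn.circleIntegrable ht.le ?_
    refine G.continuous.continuousOn.mul (ContinuousOn.inv₀ (f.continuous.continuousOn.pow _) ?_)
    exact fun z hz => pow_ne_zero _ (hfs z hz)
  -- the logarithmic derivative
  have hlog : ∮ z in C(0, t), (derivative f).eval z * (f.eval z)⁻¹ = 2 * Real.pi * Complex.I := by
    have hd : derivative f = Q + X * derivative Q := by
      conv_lhs => rw [← Polynomial.X_mul_divX_add f, hf0]
      simp [hQ]
    have e : ∮ z in C(0, t), (derivative f).eval z * (f.eval z)⁻¹ =
        ∮ z in C(0, t), ((z - 0)⁻¹ + (derivative Q).eval z * ((Q.eval z) ^ 1)⁻¹) := by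
      refine circleIntegral.integral_congr ht.le fun z hz => ?_
      have h1 := (hsph z hz).1
      have h2 := hQne z (hsph z hz).2
      simp only [hd, hfQ, eval_add, eval_mul, eval_X, sub_zero, pow_one]
      field_simp
    rw [e, circleIntegral.integral_add, hana,
      circleIntegral.integral_sub_inv_of_mem_ball (by simpa using ht), add_zero]
    · refine ContinuousOn.circleIntegrable ht.le (ContinuousOn.inv₀ (by fun_prop) ?_)
      intro z hz
      simpa using (hsph z hz).1
    · refine ContinuousOn.circleIntegrable ht.le ?_
      refine (Polynomial.continuous _).continuousOn.mul
        (ContinuousOn.inv₀ (Q.continuous.continuousOn.pow _) ?_)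
      exact fun z hz => pow_ne_zero _ (hQne z (hsph z hz).2)
  -- exact derivatives
  have hex : ∀ k < n, ∮ z in C(0, t), (C (c k) * f ^ k * derivative f).eval z *
      ((f.eval z) ^ (n + 1))⁻¹ = 0 := by
    intro k hk
    obtain ⟨j, rfl⟩ : ∃ j, n = k + 1 + j := ⟨n - (k + 1), by omega⟩
    refine circleIntegral.integral_eq_zero_of_hasDerivWithinAt (f := fun z =>
      -(c k / (j + 1)) * ((f.eval z) ^ (j + 1))⁻¹) ht.le fun z hz => ?_
    have hz0 := hfs z hz
    have := ((((f.hasDerivAt z).pow (j + 1)).inv (pow_ne_zero _ hz0)).const_mul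
      (-(c k / (j + 1)))).hasDerivWithinAt (s := Metric.sphere 0 t)
    refine this.congr_deriv ?_
    have hj : (j : ℂ) + 1 ≠ 0 := by exact_mod_cast Nat.succ_ne_zero j
    simp only [eval_mul, eval_C, eval_pow, Nat.add_sub_cancel, Pi.pow_apply]
    push_cast
    field_simp
    ring
  have hlast : ∮ z in C(0, t), (C (c n) * f ^ n * derivative f).eval z *
      ((f.eval z) ^ (n + 1))⁻¹ = 2 * Real.pi * Complex.I * c n := by
    have e : ∮ z in C(0, t), (C (c n) * f ^ n * derivative f).eval z *
      ((f.eval z) ^ (n + 1))⁻¹ = ∮ z in C(0, t), c n * ((derivative f).eval z * (f.eval z)⁻¹) := by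
      refine circleIntegral.integral_congr ht.le fun z hz => ?_
      have := hfs z hz
      simp only [eval_mul, eval_C, eval_pow]
      field_simp
      ring
    rw [e, circleIntegral.integral_const_mul, hlog]
    ring
  have hX : ∮ z in C(0, t), (X ^ (n + 1) * g).eval z * ((f.eval z) ^ (n + 1))⁻¹ = 0 := by
    refine Eq.trans ?_ (hana g (n + 1))
    refine circleIntegral.integral_congr ht.le fun z hz => ?_
    have h1 := (hsph z hz).1
    have h2 := hQne z (hsph z hz).2
    simp only [hfQ, eval_mul, eval_pow, eval_X]
    field_simp
    ring
  have hsum : ∮ z in C(0, t), ((∑ k ∈ Finset.range (n + 1), C (c k) * f ^ k) * derivative f).eval z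
      * ((f.eval z) ^ (n + 1))⁻¹ = 2 * Real.pi * Complex.I * c n := by
    rw [← hlast]
    simp only [Finset.sum_mul, eval_finsetSum]
    rw [circleIntegral.integral_fun_sum]
    · rw [Finset.sum_range_succ, Finset.sum_eq_zero, zero_add]
      exact fun k hk => hex k (Finset.mem_range.1 hk)
    · exact fun k _ => hci _ _
  rw [← hsum, hid]
  have : ∮ z in C(0, t), (1 + X ^ (n + 1) * g).eval z * ((f.eval z) ^ (n + 1))⁻¹ =
      ∮ z in C(0, t), (((1 : ℂ[X]).eval z * ((f.eval z) ^ (n + 1))⁻¹) +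
        (X ^ (n + 1) * g).eval z * ((f.eval z) ^ (n + 1))⁻¹) := by
    simp only [eval_add, add_mul]
  rw [this, circleIntegral.integral_add (hci _ _) (hci _ _), hX]
  simp


/-! ### Real-variable facts -/

lemma qr_eval (p d : ℕ) (x : ℝ) :
    qr p d x = ((P p d).map (Int.castRingHom ℝ)).eval x := by
  rw [qr, Polynomial.aeval_def, Polynomial.eval₂_eq_eval_map]; rfl

lemma qr_fun (p d : ℕ) :
    qr p d = fun x => ((P p d).map (Int.castRingHom ℝ)).eval x := funext (qr_eval p d)

lemma qc_eval (p d : ℕ) (x : ℂ) :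
    qc p d x = ((P p d).map (Int.castRingHom ℂ)).eval x := by
  rw [qc, Polynomial.aeval_def, Polynomial.eval₂_eq_eval_map]; rfl

lemma qc_fun (p d : ℕ) :
    qc p d = fun x => ((P p d).map (Int.castRingHom ℂ)).eval x := funext (qc_eval p d)

lemma crit_facts {p d : ℕ} (hp : 2 ≤ p) (hd : 1 ≤ d) {s : ℝ} (hs : 0 < s)
    (hmin : ∀ t : ℝ, 0 < t → deriv (qr p d) t = 0 → s ≤ t) :
    s < 1 ∧ ∀ i ≤ d, 0 < qr p i s := by
  have hcont : ∀ i, Continuous (qr p i) := fun i => by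
    rw [qr_fun]; exact Polynomial.continuous _
  have hder : ∀ x, deriv (qr p d) x =
      (Polynomial.derivative ((P p d).map (Int.castRingHom ℝ))).eval x := by
    intro x; rw [qr_fun]; exact Polynomial.deriv _
  have hs1 : s < 1 := by
    obtain ⟨c, hc, hc0⟩ := exists_deriv_eq_zero (f := qr p d) one_pos (hcont d).continuousOn
      (by rw [qr_at_zero p hp, qr_at_one p d hd])
    exact lt_of_le_of_lt (hmin c hc.1 hc0) hc.2
  refine ⟨hs1, ?_⟩
  have hdc : Continuous (deriv (qr p d)) := by
    rw [funext hder]; exact Polynomial.continuous _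
  have hd0 : deriv (qr p d) 0 = 1 := by
    rw [hder, ← Polynomial.coeff_zero_eq_eval_zero, Polynomial.coeff_derivative]
    simp [P_coeff_one p hp]
  have hdpos : ∀ x, 0 < x → x < s → 0 < deriv (qr p d) x := by
    intro x hx hxs
    by_contra hneg
    push Not at hneg
    obtain ⟨c, hc, hc0⟩ := intermediate_value_Icc' hx.le hdc.continuousOn
      (show (0 : ℝ) ∈ Set.Icc (deriv (qr p d) x) (deriv (qr p d) 0) from
        ⟨hneg, by rw [hd0]; exact zero_le_one⟩)
    have : c ≠ 0 := by rintro rfl; rw [hd0] at hc0; exact one_ne_zero hc0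
    have hcp : 0 < c := lt_of_le_of_ne hc.1 this.symm
    have := hmin c hcp hc0
    linarith [hc.2]
  have hmono : StrictMonoOn (qr p d) (Set.Icc 0 s) := by
    refine strictMonoOn_of_deriv_pos (convex_Icc 0 s) (hcont d).continuousOn fun x hx => ?_
    rw [interior_Icc] at hx
    exact hdpos x hx.1 hx.2
  have hpd : ∀ x, 0 < x → x ≤ s → 0 < qr p d x := by
    intro x hx hxs
    have := hmono (Set.left_mem_Icc.2 hs.le) ⟨hx.le, hxs⟩ hx
    rwa [qr_at_zero p hp] at this
  have step : ∀ j, (∀ x, 0 < x → x ≤ s → 0 < qr p (j + 1) x) →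
      ∀ x, 0 < x → x ≤ s → 0 < qr p j x := by
    intro j hj x hx hxs
    have hx1 : x < 1 := hxs.trans_lt hs1
    have hdec : ∀ x, 0 < x → x ≤ s → qr p j (x ^ p) < qr p j x := by
      intro x hx hxs
      have := hj x hx hxs
      rw [qr_succ] at this
      linarith
    have hle : ∀ k, x ^ k ≤ 1 := fun k => pow_le_one₀ hx.le hx1.le
    have hanti : Antitone fun i : ℕ => qr p j (x ^ p ^ i) := by
      refine antitone_nat_of_succ_le fun i => ?_
      have := hdec (x ^ p ^ i) (by positivity)
        ((pow_le_of_le_one hx.le hx1.le (by positivity)).trans hxs)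
      rw [← pow_mul, ← pow_succ] at this
      exact this.le
    have hlim : Filter.Tendsto (fun i : ℕ => qr p j (x ^ p ^ i)) Filter.atTop (nhds 0) := by
      rw [← qr_at_zero p hp j]
      refine (hcont j).continuousAt.tendsto.comp ?_
      exact (tendsto_pow_atTop_nhds_zero_of_lt_one hx.le hx1).comp
        (tendsto_pow_atTop_atTop_of_one_lt (by omega))
    have h1 := hanti.le_of_tendsto hlim 1
    have h2 := hdec x hx hxs
    simp at h1
    linarith
  have all : ∀ k ≤ d, ∀ x, 0 < x → x ≤ s → 0 < qr p (d - k) x := by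
    intro k
    induction k with
    | zero => intro _; simpa using hpd
    | succ k ih =>
      intro hk
      apply step
      have := ih (by omega)
      rwa [show d - (k + 1) + 1 = d - k by omega]
  intro i hi
  have := all (d - i) (by omega) s hs le_rfl
  rwa [show d - (d - i) = i by omega] at this


/-! ### Laplace's method -/

lemma pow_bound {a x : ℝ} (ha : 0 ≤ a) (hx : 0 ≤ x) {n : ℕ} (hn : 2 ≤ n)
    (h : a ^ 2 * (1 + x / n) ≤ 1) : a ^ n ≤ (1 + x / 2)⁻¹ := by
  have hn0 : (0 : ℝ) < n := by positivity
  have hb : 1 + x / 2 ≤ (1 + x / n) ^ ((n : ℝ) / 2) := by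
    have h2 : (2 : ℝ) ≤ n := by exact_mod_cast hn
    have := one_add_mul_self_le_rpow_one_add (s := x / n)
      (by have : 0 ≤ x / n := by positivity
          linarith) (p := (n : ℝ) / 2) (by linarith)
    refine le_trans (le_of_eq ?_) this
    field_simp
  have hb2 : (1 + x / 2) ^ 2 ≤ (1 + x / n) ^ n := by
    calc (1 + x / 2) ^ 2 ≤ ((1 + x / n) ^ ((n : ℝ) / 2)) ^ 2 := by gcongr
      _ = (1 + x / n) ^ n := by
        rw [← Real.rpow_natCast, ← Real.rpow_mul (by positivity), ← Real.rpow_natCast]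
        congr 1
        push_cast
        ring
  have h3 : (a ^ n * (1 + x / 2)) ^ 2 ≤ 1 := by
    calc (a ^ n * (1 + x / 2)) ^ 2 = (a ^ n) ^ 2 * (1 + x / 2) ^ 2 := by ring
      _ ≤ (a ^ n) ^ 2 * (1 + x / n) ^ n := by gcongr
      _ = (a ^ 2 * (1 + x / n)) ^ n := by rw [mul_pow, ← pow_mul, ← pow_mul, mul_comm n 2]
      _ ≤ 1 := pow_le_one₀ (by positivity) h
  have h4 : a ^ n * (1 + x / 2) ≤ 1 := by
    have := abs_le_of_sq_le_sq (a := a ^ n * (1 + x / 2)) (b := 1) (by simpa using h3) zero_le_one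
    exact (abs_le.1 this).2
  rw [← one_div, le_div_iff₀ (by positivity)]
  exact h4

open Filter Topology in
lemma laplace (h : ℝ → ℂ) (hc : Continuous h) {δ c A : ℝ} (hδ : 0 < δ) (hcpos : 0 < c)
    (hb : ∀ θ, |θ| ≤ δ → ‖h θ‖ ^ 2 * (1 + c * θ ^ 2) ≤ 1)
    (h0 : h 0 = 1)
    (hlim : Tendsto (fun θ : ℝ => (h θ - 1) / (θ : ℂ) ^ 2) (𝓝[≠] 0) (𝓝 ((-(A / 2) : ℝ) : ℂ))) :
    0 < A ∧ Tendsto (fun n : ℕ => ((√n : ℝ) : ℂ) *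
      ∫ θ in -δ..δ, Complex.exp (θ * Complex.I) * h θ ^ n) atTop
      (𝓝 ((√(Real.pi / (A / 2)) : ℝ) : ℂ)) := by
  have hsq : Tendsto (fun n : ℕ => √(n : ℝ)) atTop atTop :=
    Real.tendsto_sqrt_atTop.comp tendsto_natCast_atTop_atTop
  have hθ : ∀ u : ℝ, Tendsto (fun n : ℕ => u / √(n : ℝ)) atTop (𝓝 0) := fun u =>
    tendsto_const_nhds.div_atTop hsq
  -- pointwise limit
  have hpt : ∀ u : ℝ, Tendsto (fun n : ℕ => h (u / √(n : ℝ)) ^ n) atTop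
      (𝓝 (Complex.exp ((-(A / 2) * u ^ 2 : ℝ) : ℂ))) := by
    intro u
    have hg : Tendsto (fun n : ℕ => (n : ℂ) * (h (u / √(n : ℝ)) - 1)) atTop
        (𝓝 ((-(A / 2) * u ^ 2 : ℝ) : ℂ)) := by
      by_cases hu : u = 0
      · subst hu; simp [h0]
      · have h1 : Tendsto (fun n : ℕ => u / √(n : ℝ)) atTop (𝓝[≠] 0) := by
          rw [tendsto_nhdsWithin_iff]
          refine ⟨hθ u, ?_⟩
          filter_upwards [eventually_gt_atTop 0] with n hn
          have : (0 : ℝ) < √n := Real.sqrt_pos.2 (by exact_mod_cast hn)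
          simp only [Set.mem_compl_iff, Set.mem_singleton_iff]
          positivity
        have h2 := (hlim.comp h1).mul_const ((u : ℂ) ^ 2)
        have e : ((-(A / 2) * u ^ 2 : ℝ) : ℂ) = ((-(A / 2) : ℝ) : ℂ) * (u : ℂ) ^ 2 := by
          push_cast; ring
        rw [e]
        refine h2.congr' ?_
        filter_upwards [eventually_gt_atTop 0] with n hn
        have hn' : (0 : ℝ) < n := by exact_mod_cast hn
        have h3 : (((u / √(n : ℝ) : ℝ)) : ℂ) ^ 2 = (u : ℂ) ^ 2 / n := by
          rw [← Complex.ofReal_pow, div_pow, Real.sq_sqrt hn'.le]; push_cast; rfl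
        simp only [Function.comp]
        rw [h3]
        have hu' : (u : ℂ) ≠ 0 := by exact_mod_cast hu
        have hn2 : (n : ℂ) ≠ 0 := by exact_mod_cast hn.ne'
        field_simp
    have := Complex.tendsto_one_add_pow_exp_of_tendsto hg
    simpa using this
  have hbd : ∀ n : ℕ, 2 ≤ n → ∀ u : ℝ, |u| ≤ δ * √n →
      ‖h (u / √(n : ℝ)) ^ n‖ ≤ (1 + c * u ^ 2 / 2)⁻¹ := by
    intro n hn u hu
    have hn' : (0 : ℝ) < n := by positivity
    have hsn : (0 : ℝ) < √n := Real.sqrt_pos.2 hn'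
    rw [norm_pow]
    refine pow_bound (norm_nonneg _) (by positivity) hn ?_
    have := hb (u / √(n : ℝ)) (by rw [abs_div, abs_of_pos hsn, div_le_iff₀ hsn]; exact hu)
    rw [div_pow, Real.sq_sqrt hn'.le, ← mul_div_assoc] at this
    exact this
  have hev : ∀ u : ℝ, ∀ᶠ n : ℕ in atTop, |u| < δ * √(n : ℝ) := fun u =>
    (hsq.const_mul_atTop hδ).eventually_gt_atTop |u|
  have hA : 0 < A := by
    have h1 : ‖Complex.exp ((-(A / 2) * 1 ^ 2 : ℝ) : ℂ)‖ ≤ (1 + c * 1 ^ 2 / 2)⁻¹ := by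
      refine le_of_tendsto (hpt 1).norm ?_
      filter_upwards [hev 1, eventually_ge_atTop 2] with n h1 h2
      exact hbd n h2 1 h1.le
    rw [← Complex.ofReal_exp, Complex.norm_real, Real.norm_of_nonneg (Real.exp_nonneg _)] at h1
    have h2 : (1 + c * 1 ^ 2 / 2)⁻¹ < 1 := inv_lt_one_of_one_lt₀ (by linarith)
    have h3 := Real.exp_lt_one_iff.1 (h1.trans_lt h2)
    linarith
  refine ⟨hA, ?_⟩
  set F : ℕ → ℝ → ℂ := fun n => Set.indicator (Set.Ioc (-(δ * √(n : ℝ))) (δ * √(n : ℝ)))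
    (fun u => Complex.exp ((u / √(n : ℝ) : ℝ) * Complex.I) * h (u / √(n : ℝ)) ^ n) with hF
  have hFint : ∀ᶠ n : ℕ in atTop, ∫ u, F n u = ((√n : ℝ) : ℂ) *
      ∫ θ in -δ..δ, Complex.exp (θ * Complex.I) * h θ ^ n := by
    filter_upwards [eventually_gt_atTop 0] with n hn
    have hsn : (0 : ℝ) < √n := Real.sqrt_pos.2 (by exact_mod_cast hn)
    rw [hF, MeasureTheory.integral_indicator measurableSet_Ioc,
      ← intervalIntegral.integral_of_le (by nlinarith [mul_pos hδ hsn]),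
      intervalIntegral.integral_comp_div (fun θ : ℝ => Complex.exp (θ * Complex.I) * h θ ^ n) hsn.ne']
    rw [neg_div, mul_div_cancel_right₀ _ hsn.ne', Complex.real_smul]
  refine Tendsto.congr' hFint ?_
  have hgauss : ((√(Real.pi / (A / 2)) : ℝ) : ℂ) =
      ∫ u : ℝ, Complex.exp ((-(A / 2) * u ^ 2 : ℝ) : ℂ) := by
    rw [← integral_gaussian, ← integral_complex_ofReal]
    simp only [Complex.ofReal_exp]
  rw [hgauss]
  refine MeasureTheory.tendsto_integral_filter_of_dominated_convergence
    (fun u => (1 + c * u ^ 2 / 2)⁻¹) ?_ ?_ ?_ ?_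
  · refine Eventually.of_forall fun n => ?_
    refine MeasureTheory.AEStronglyMeasurable.indicator ?_ measurableSet_Ioc
    exact Continuous.aestronglyMeasurable (by fun_prop)
  · filter_upwards [eventually_ge_atTop 2] with n hn
    refine Eventually.of_forall fun u => ?_
    simp only [hF]
    by_cases hu : u ∈ Set.Ioc (-(δ * √(n : ℝ))) (δ * √(n : ℝ))
    · rw [Set.indicator_of_mem hu, norm_mul, Complex.norm_exp_ofReal_mul_I, one_mul]
      exact hbd n hn u (abs_le.2 ⟨hu.1.le, hu.2⟩)
    · rw [Set.indicator_of_notMem hu, norm_zero]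
      positivity
  · have h1 := integrable_inv_one_add_sq.comp_mul_left' (R := √(c / 2)) (by positivity)
    refine h1.congr (Eventually.of_forall fun u => ?_)
    simp only
    rw [mul_pow, Real.sq_sqrt (by positivity)]
    ring_nf
  · refine Eventually.of_forall fun u => ?_
    have h1 : Tendsto (fun n : ℕ => Complex.exp ((u / √(n : ℝ) : ℝ) * Complex.I) *
        h (u / √(n : ℝ)) ^ n) atTop (𝓝 (1 * Complex.exp ((-(A / 2) * u ^ 2 : ℝ) : ℂ))) := by
      refine Tendsto.mul ?_ (hpt u)
      have : Continuous fun θ : ℝ => Complex.exp (θ * Complex.I) := by fun_prop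
      have h2 := (this.tendsto 0).comp (hθ u)
      simpa [Function.comp_def] using h2
    rw [one_mul] at h1
    refine h1.congr' ?_
    filter_upwards [hev u] with n hn
    have := abs_lt.1 hn
    simp only [hF]
    rw [Set.indicator_of_mem (show u ∈ Set.Ioc (-(δ * √(n : ℝ))) (δ * √(n : ℝ)) from ⟨this.1, this.2.le⟩)]


/-! ### Assembly -/

def hfun (p d : ℕ) (s : ℝ) (θ : ℝ) : ℂ :=
  (qr p d s : ℂ) / qc p d (s * Complex.exp (θ * Complex.I))

lemma qc_ne {p d : ℕ} (hp : 2 ≤ p) {s : ℝ} (hs : 0 < s) (hs1 : s < 1)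
    (hpos : ∀ i ≤ d, 0 < qr p i s) (θ : ℝ) : qc p d (s * Complex.exp (θ * Complex.I)) ≠ 0 := by
  refine (main_ind hs hs1 hp d hpos).1 _ ?_ ?_
  · exact mul_ne_zero (by exact_mod_cast hs.ne') (Complex.exp_ne_zero _)
  · simp [Complex.norm_exp_ofReal_mul_I, abs_of_pos hs]

lemma hfun_cont {p d : ℕ} (hp : 2 ≤ p) {s : ℝ} (hs : 0 < s) (hs1 : s < 1)
    (hpos : ∀ i ≤ d, 0 < qr p i s) : Continuous (hfun p d s) := by
  unfold hfun
  refine Continuous.div continuous_const ?_ (qc_ne hp hs hs1 hpos)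
  rw [qc_fun]
  refine (Polynomial.continuous _).comp ?_
  fun_prop

lemma norm_sq_one_sub (τ ψ : ℝ) :
    ‖1 - (τ : ℂ) * Complex.exp (ψ * Complex.I)‖ ^ 2 = (1 - τ) ^ 2 + 2 * τ * (1 - Real.cos ψ) := by
  rw [← Complex.normSq_eq_norm_sq, Complex.exp_mul_I, ← Complex.ofReal_cos, ← Complex.ofReal_sin,
    Complex.normSq_apply]
  simp [Complex.cos_ofReal_re, Complex.sin_ofReal_re]
  have := Real.sin_sq_add_cos_sq ψ
  linear_combination (τ ^ 2) * this

lemma hfun_bound {p d : ℕ} (hp : 2 ≤ p) (hd : 1 ≤ d) {s : ℝ} (hs : 0 < s) (hs1 : s < 1)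
    (hpos : ∀ i ≤ d, 0 < qr p i s) (θ : ℝ) (hθ : |θ| ≤ Real.pi / ((p : ℝ) - 1)) :
    ‖hfun p d s θ‖ ^ 2 * (1 + (4 * s ^ (p - 1) * ((p : ℝ) - 1) ^ 2 /
      (Real.pi ^ 2 * (1 - s ^ (p - 1)) ^ 2)) * θ ^ 2) ≤ 1 := by
  obtain ⟨e, rfl⟩ := Nat.exists_eq_add_of_le' hd
  have hp1 : (0 : ℝ) < (p : ℝ) - 1 := by
    have : (2 : ℝ) ≤ p := by exact_mod_cast hp
    linarith
  set z : ℂ := s * Complex.exp (θ * Complex.I) with hz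
  have hzn : ‖z‖ = s := by simp [hz, Complex.norm_exp_ofReal_mul_I, abs_of_pos hs]
  have hlb := lower_bound hs hs1 hp e hpos z hzn
  have hq0 : 0 < ‖qc p (e + 1) z‖ := norm_pos_iff.2 (qc_ne hp hs hs1 hpos θ)
  set τ := s ^ (p - 1) with hτ
  have hτ0 : 0 < τ := by positivity
  have hτ1 : τ < 1 := pow_lt_one₀ hs.le hs1 (by omega)
  set ψ : ℝ := ((p : ℝ) - 1) * θ with hψ
  have hzp : z ^ (p - 1) = (τ : ℂ) * Complex.exp (ψ * Complex.I) := by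
    rw [hz, mul_pow, ← Complex.exp_nat_mul, hτ, hψ, Nat.cast_sub (by omega)]
    push_cast
    ring_nf
  have hψπ : |ψ| ≤ Real.pi := by
    rw [hψ, abs_mul, abs_of_pos hp1]
    rw [le_div_iff₀ hp1] at hθ
    linarith
  have hcos := Real.cos_le_one_sub_mul_cos_sq hψπ
  have hn := norm_sq_one_sub τ ψ
  rw [← hzp] at hn
  have hS := hpos (e + 1) le_rfl
  have hge : (1 - τ) ^ 2 * (1 + (4 * τ * ((p : ℝ) - 1) ^ 2 /
      (Real.pi ^ 2 * (1 - τ) ^ 2)) * θ ^ 2) ≤ ‖1 - z ^ (p - 1)‖ ^ 2 := by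
    rw [hn]
    have h1 : (1 - τ) ^ 2 * (1 + (4 * τ * ((p : ℝ) - 1) ^ 2 /
      (Real.pi ^ 2 * (1 - τ) ^ 2)) * θ ^ 2) = (1 - τ) ^ 2 + 2 * τ * (2 / Real.pi ^ 2 * ψ ^ 2) := by
      have : 1 - τ ≠ 0 := by linarith
      have := Real.pi_ne_zero
      rw [hψ]
      field_simp
      ring
    rw [h1]
    gcongr
    linarith
  have hh : ‖hfun p (e + 1) s θ‖ = qr p (e + 1) s / ‖qc p (e + 1) z‖ := by
    rw [hfun, norm_div, Complex.norm_real, Real.norm_of_nonneg hS.le]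
  rw [hh, div_pow]
  set κ := (1 + (4 * τ * ((p : ℝ) - 1) ^ 2 / (Real.pi ^ 2 * (1 - τ) ^ 2)) * θ ^ 2) with hκ
  rw [div_mul_eq_mul_div, div_le_one (by positivity)]
  have h1 : 0 < (1 - τ) ^ 2 := by
    have : 0 < 1 - τ := by linarith
    positivity
  have h2 : (qr p (e + 1) s) ^ 2 * ‖1 - z ^ (p - 1)‖ ^ 2 ≤ ‖qc p (e + 1) z‖ ^ 2 * (1 - τ) ^ 2 := by
    rw [← mul_pow, ← mul_pow]
    gcongr
  have h3 : (qr p (e + 1) s) ^ 2 * ((1 - τ) ^ 2 * κ) ≤ ‖qc p (e + 1) z‖ ^ 2 * (1 - τ) ^ 2 :=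
    le_trans (by gcongr) h2
  refine le_of_mul_le_mul_right ?_ h1
  linarith

open Polynomial in
lemma taylor2 (f : ℂ[X]) (s : ℂ) (h : (derivative f).eval s = 0) :
    ∃ k : ℂ[X], (∀ z, f.eval z = f.eval s + k.eval z * (z - s) ^ 2) ∧
      (derivative (derivative f)).eval s = 2 * k.eval s := by
  obtain ⟨k, hk⟩ := Polynomial.binomExpansion (f.map (algebraMap ℂ ℂ[X])) (C s) (X - C s)
  rw [add_sub_cancel, derivative_map, eval_map_algebraMap, eval_map_algebraMap,
    eval_map_algebraMap] at hk
  have cmp : ∀ u v : ℂ[X], aeval u v = v.comp u := fun u v => rfl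
  simp only [cmp, comp_X, comp_C, h, C_0, zero_mul, add_zero] at hk
  refine ⟨k, fun z => ?_, ?_⟩
  · conv_lhs => rw [hk]
    simp
  · rw [hk]
    simp [pow_two]
    ring

open Filter Topology in
lemma hfun_lim {p d : ℕ} (hp : 2 ≤ p) {s : ℝ} (hs : 0 < s) (hs1 : s < 1)
    (hpos : ∀ i ≤ d, 0 < qr p i s) (hcrit : deriv (qr p d) s = 0) :
    Tendsto (fun θ : ℝ => (hfun p d s θ - 1) / (θ : ℂ) ^ 2) (𝓝[≠] 0)
      (𝓝 ((-((-(s ^ 2 * deriv (deriv (qr p d)) s) / qr p d s) / 2) : ℝ) : ℂ)) := by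
  set fr := (P p d).map (Int.castRingHom ℝ) with hfr
  set fc := (P p d).map (Int.castRingHom ℂ) with hfc
  have hmap : fc = fr.map Complex.ofRealHom := by
    rw [hfc, hfr, Polynomial.map_map]
    congr 1
  have hd1 : deriv (qr p d) = fun x => (Polynomial.derivative fr).eval x := by
    rw [qr_fun]; ext x; exact Polynomial.deriv _
  have hd2 : deriv (deriv (qr p d)) s =
      (Polynomial.derivative (Polynomial.derivative fr)).eval s := by
    rw [hd1]; exact Polynomial.deriv _
  have hc1 : (Polynomial.derivative fc).eval (s : ℂ) = 0 := by
    rw [hmap, Polynomial.derivative_map]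
    have := Polynomial.eval_map_apply (p := Polynomial.derivative fr) Complex.ofRealHom s
    rw [Complex.ofRealHom_eq_coe] at this
    rw [this]
    rw [hd1] at hcrit
    simp only at hcrit
    rw [hcrit]; simp
  obtain ⟨k, hk, hk2⟩ := taylor2 fc s hc1
  have hks : (((deriv (deriv (qr p d)) s : ℝ)) : ℂ) = 2 * k.eval (s : ℂ) := by
    rw [← hk2, hmap, Polynomial.derivative_map, Polynomial.derivative_map]
    have := Polynomial.eval_map_apply (p := Polynomial.derivative (Polynomial.derivative fr))
      Complex.ofRealHom s
    rw [Complex.ofRealHom_eq_coe] at this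
    rw [this, hd2]
    simp
  have hS := hpos d le_rfl
  have hSc : ((qr p d s : ℝ) : ℂ) ≠ 0 := by exact_mod_cast hS.ne'
  set w : ℝ → ℂ := fun θ => s * Complex.exp (θ * Complex.I) with hw
  have hw0 : w 0 = s := by simp [hw]
  have hwc : Continuous w := by fun_prop
  have hwd : HasDerivAt w (s * Complex.I) 0 := by
    have h1 : HasDerivAt (fun θ : ℝ => (θ : ℂ) * Complex.I) (1 * Complex.I) 0 :=
      (Complex.ofRealCLM.hasDerivAt (x := (0 : ℝ))).mul_const Complex.I
    have h2 := (h1.cexp).const_mul (s : ℂ)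
    simpa using h2
  have hslope := hasDerivAt_iff_tendsto_slope_zero.1 hwd
  have hlim1 : Tendsto (fun θ => k.eval (w θ)) (𝓝[≠] 0) (𝓝 (k.eval (s : ℂ))) := by
    have : Continuous fun θ => k.eval (w θ) := k.continuous.comp hwc
    have := this.tendsto 0
    rw [hw0] at this
    exact this.mono_left nhdsWithin_le_nhds
  have hlim2 : Tendsto (fun θ => qc p d (w θ)) (𝓝[≠] 0) (𝓝 ((qr p d s : ℝ) : ℂ)) := by
    have : Continuous fun θ => qc p d (w θ) := by
      rw [qc_fun]; exact (Polynomial.continuous _).comp hwc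
    have := this.tendsto 0
    rw [hw0, qc_ofReal] at this
    exact this.mono_left nhdsWithin_le_nhds
  have hL := ((hslope.pow 2).mul hlim1).div hlim2 hSc
  have hL' := hL.neg
  have e : -((s * Complex.I) ^ 2 * k.eval (s : ℂ) / ((qr p d s : ℝ) : ℂ)) =
      ((-((-(s ^ 2 * deriv (deriv (qr p d)) s) / qr p d s) / 2) : ℝ) : ℂ) := by
    push_cast
    rw [hks, mul_pow, Complex.I_sq]
    field_simp
  rw [e] at hL'
  refine hL'.congr' ?_
  filter_upwards [self_mem_nhdsWithin] with θ hθ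
  have hθ0 : (θ : ℂ) ≠ 0 := by exact_mod_cast hθ
  have hq0 : qc p d (w θ) ≠ 0 := qc_ne hp hs hs1 hpos θ
  have h1 : qc p d (w θ) = qr p d s + k.eval (w θ) * (w θ - s) ^ 2 := by
    rw [← qc_ofReal, qc_eval, qc_eval, hk]
  have h2 : hfun p d s θ = qr p d s / qc p d (w θ) := rfl
  simp only [Pi.div_apply, zero_add, hw0, Complex.real_smul, Complex.ofReal_inv]
  rw [h2]
  field_simp
  rw [h1]
  ring

lemma hfun_zero {p d : ℕ} {s : ℝ} (hpos : 0 < qr p d s) : hfun p d s 0 = 1 := by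
  have hSc : ((qr p d s : ℝ) : ℂ) ≠ 0 := by exact_mod_cast hpos.ne'
  simp [hfun, qc_ofReal, hSc]

lemma integral_period {p d : ℕ} (hp : 2 ≤ p) {s : ℝ} (hs : 0 < s) (hs1 : s < 1)
    (hpos : ∀ i ≤ d, 0 < qr p i s) (m : ℕ) :
    ∫ θ in (0 : ℝ)..2 * Real.pi, Complex.exp (θ * Complex.I) * hfun p d s θ ^ (m * (p - 1) + 1) =
    ((p : ℂ) - 1) * ∫ θ in -(Real.pi / ((p : ℝ) - 1))..(Real.pi / ((p : ℝ) - 1)),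
      Complex.exp (θ * Complex.I) * hfun p d s θ ^ (m * (p - 1) + 1) := by
  have hp1 : (0 : ℝ) < (p : ℝ) - 1 := by
    have : (2 : ℝ) ≤ p := by exact_mod_cast hp
    linarith
  have hp1c : (p : ℂ) - 1 ≠ 0 := by exact_mod_cast hp1.ne'
  set G : ℝ → ℂ := fun θ => Complex.exp (θ * Complex.I) * hfun p d s θ ^ (m * (p - 1) + 1) with hG
  set T : ℝ := 2 * Real.pi / ((p : ℝ) - 1) with hT
  set w : ℂ := Complex.exp (T * Complex.I) with hw
  have hw1 : w ^ (p - 1) = 1 := by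
    rw [hw, ← Complex.exp_nat_mul, Nat.cast_sub (by omega), hT]
    rw [← Complex.exp_two_pi_mul_I]
    congr 1
    push_cast
    field_simp
  have hw0 : w ≠ 0 := Complex.exp_ne_zero _
  have hper : Function.Periodic G T := by
    intro θ
    have e1 : Complex.exp (((θ + T : ℝ) : ℂ) * Complex.I) = w * Complex.exp (θ * Complex.I) := by
      rw [hw, ← Complex.exp_add]; congr 1; push_cast; ring
    have e2 : hfun p d s (θ + T) = hfun p d s θ / w := by
      rw [hfun, hfun, e1, show (s : ℂ) * (w * Complex.exp (θ * Complex.I)) =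
        w * (s * Complex.exp (θ * Complex.I)) by ring, qc_rot p hp d w _ hw1, div_div]
      congr 1
      ring
    simp only [hG]
    rw [e1, e2, div_pow, pow_succ w, mul_comm m, pow_mul w, hw1, one_pow]
    field_simp
  have hcont : Continuous G := by
    have := hfun_cont hp hs hs1 hpos
    fun_prop
  have h1 := hper.intervalIntegral_add_zsmul_eq ((p - 1 : ℕ) : ℤ) 0
    fun a b => hcont.intervalIntegrable a b
  have e3 : (0 : ℝ) + ((p - 1 : ℕ) : ℤ) • T = 2 * Real.pi := by
    rw [zsmul_eq_mul, hT]
    push_cast [Nat.cast_sub (show 1 ≤ p by omega)]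
    field_simp
    ring
  rw [e3, hper.intervalIntegral_add_eq 0 (-(Real.pi / ((p : ℝ) - 1)))] at h1
  rw [h1, zsmul_eq_mul]
  push_cast [Nat.cast_sub (show 1 ≤ p by omega)]
  congr 2
  rw [hT]; ring

lemma coeff_integral {p d : ℕ} (hp : 2 ≤ p) {s : ℝ} (hs : 0 < s) (hs1 : s < 1)
    (hpos : ∀ i ≤ d, 0 < qr p i s) (y : PowerSeries ℚ)
    (h0 : PowerSeries.constantCoeff y = 0)
    (heq : ∑ k ∈ Finset.range (d + 1),
        (-1 : PowerSeries ℚ) ^ k * (d.choose k : PowerSeries ℚ) * y ^ p ^ k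
        = PowerSeries.X) (n : ℕ) :
    2 * Real.pi * (((PowerSeries.coeff (n + 1) y : ℚ) : ℂ) * (n + 1)) * (qr p d s : ℂ) ^ (n + 1) =
      s * ∫ θ in (0 : ℝ)..2 * Real.pi, Complex.exp (θ * Complex.I) * hfun p d s θ ^ (n + 1) := by
  have hc0 : (P p d).coeff 0 = 0 := by
    have := qr_at_zero p hp d
    rw [qr_eval, ← Polynomial.coeff_zero_eq_eval_zero, Polynomial.coeff_map] at this
    simpa using this
  have hc1 := P_coeff_one p hp d
  have ha : Polynomial.aeval y ((P p d).map (Int.castRingHom ℚ)) = PowerSeries.X := by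
    rw [← heq, P_eq]
    simp [Polynomial.map_sum]
  obtain ⟨g, hg⟩ := formal_inv ((P p d).map (Int.castRingHom ℚ)) (by simp [hc0]) (by simp [hc1]) y
    h0 ha (n + 1)
  have hg' := congrArg (Polynomial.map (algebraMap ℚ ℂ)) hg
  have hmm : ((P p d).map (Int.castRingHom ℚ)).map (algebraMap ℚ ℂ) =
      (P p d).map (Int.castRingHom ℂ) := by
    rw [Polynomial.map_map]
    congr 1
  simp only [Polynomial.map_mul, Polynomial.map_sum, Polynomial.map_pow, Polynomial.map_C,
    ← Polynomial.derivative_map, Polynomial.map_add, Polynomial.map_one, Polynomial.map_X,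
    hmm] at hg'
  have hcon := contour ((P p d).map (Int.castRingHom ℂ)) (by simp [hc0]) (by simp [hc1]) hs
    (fun z hz hzs => by rw [← qc_eval]; exact (main_ind hs hs1 hp d hpos).1 z hz hzs) n _ _ hg'
  have hSc : ((qr p d s : ℝ) : ℂ) ≠ 0 := by exact_mod_cast (hpos d le_rfl).ne'
  rw [circleIntegral] at hcon
  have e : ∀ θ : ℝ, deriv (circleMap 0 s) θ • ((Polynomial.eval (circleMap 0 s θ)
      ((P p d).map (Int.castRingHom ℂ))) ^ (n + 1))⁻¹ =
      (s * Complex.I * ((qr p d s : ℂ) ^ (n + 1))⁻¹) *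
        (Complex.exp (θ * Complex.I) * hfun p d s θ ^ (n + 1)) := by
    intro θ
    rw [deriv_circleMap, circleMap_zero, ← qc_eval, hfun, div_pow, smul_eq_mul]
    have := qc_ne hp hs hs1 hpos θ
    field_simp
  simp only [e] at hcon
  rw [intervalIntegral.integral_const_mul] at hcon
  have hI := Complex.I_ne_zero
  set J := ∫ θ in (0 : ℝ)..2 * Real.pi, Complex.exp (θ * Complex.I) * hfun p d s θ ^ (n + 1)
  field_simp at hcon
  simp at hcon
  linear_combination -hcon

end S9
end

open Filter
/-- Fix `d ≥ 1` and `p ≥ 2`, let `q(z) = ∑_{k=0}^{d} (-1)^k C(d,k) z^{p^k}`,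
and let `s > 0` be the smallest positive real with `q'(s) = 0`.  Then, as `n → ∞` along the
arithmetic progression `n ≡ 1 (mod p-1)` (i.e. `n = m(p-1)+1` with `m → ∞`),
`C_{d,p}(n) ∼ (p-1)/√(-2π q''(s)) ⬝ n^{-3/2} ⬝ q(s)^{1/2 - n}`; that is, the ratio
`C_{d,p}(n) ⬝ n^{3/2} ⬝ q(s)^{n - 1/2} ⬝ √(-2π q''(s)) / (p-1)` tends to `1`.  Here
`C_{d,p}(n)` is the coefficient of `x^n` in the unique power series `y ∈ ℚ⟦x⟧` with zero
constant term satisfying `∑_{k=0}^{d} (-1)^k C(d,k) y^{p^k} = x`. -/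
theorem statement_9 (d p : ℕ) (hd : 1 ≤ d) (hp : 2 ≤ p)
    (y : PowerSeries ℚ)
    (h0 : PowerSeries.constantCoeff y = 0)
    (heq : ∑ k ∈ Finset.range (d + 1),
        (-1 : PowerSeries ℚ) ^ k * (d.choose k : PowerSeries ℚ) * y ^ p ^ k
        = PowerSeries.X)
    (q : ℝ → ℝ)
    (hq : ∀ z : ℝ, q z =
        ∑ k ∈ Finset.range (d + 1), (-1 : ℝ) ^ k * (d.choose k : ℝ) * z ^ p ^ k)
    (s : ℝ) (hs : 0 < s) (hcrit : deriv q s = 0)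
    (hmin : ∀ t : ℝ, 0 < t → deriv q t = 0 → s ≤ t) :
    Tendsto
      (fun m : ℕ =>
        ((PowerSeries.coeff (m * (p - 1) + 1) y : ℚ) : ℝ) *
          ((m * (p - 1) + 1 : ℕ) : ℝ) ^ ((3 : ℝ) / 2) *
          q s ^ (((m * (p - 1) + 1 : ℕ) : ℝ) - 1 / 2) *
          Real.sqrt (-(2 * Real.pi * deriv (deriv q) s)) / ((p : ℝ) - 1))
      atTop (nhds 1) := by
  have hqf : q = S9.qr p d := by
    ext z
    rw [hq, S9.qr, S9.P_eq]
    simp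
  subst hqf
  obtain ⟨hs1, hpos⟩ := S9.crit_facts hp hd hs hmin
  have hS := hpos d le_rfl
  have hp1 : (0 : ℝ) < (p : ℝ) - 1 := by
    have : (2 : ℝ) ≤ p := by exact_mod_cast hp
    linarith
  have hτ1 : s ^ (p - 1) < 1 := pow_lt_one₀ hs.le hs1 (by omega)
  have hcpos : 0 < (4 * s ^ (p - 1) * ((p : ℝ) - 1) ^ 2 /
      (Real.pi ^ 2 * (1 - s ^ (p - 1)) ^ 2)) := by
    have : 0 < 1 - s ^ (p - 1) := by linarith
    have := Real.pi_pos
    positivity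
  obtain ⟨hA, hL⟩ := S9.laplace (S9.hfun p d s) (S9.hfun_cont hp hs hs1 hpos)
    (div_pos Real.pi_pos hp1) hcpos (S9.hfun_bound hp hd hs hs1 hpos) (S9.hfun_zero hS)
    (S9.hfun_lim hp hs hs1 hpos hcrit)
  set S := S9.qr p d s with hSdef
  set D := deriv (deriv (S9.qr p d)) s with hD
  have hD0 : D < 0 := by
    by_contra hneg
    push Not at hneg
    have : -(s ^ 2 * D) / S ≤ 0 :=
      div_nonpos_of_nonpos_of_nonneg (by nlinarith [sq_nonneg s]) hS.le
    linarith
  have hmt : Tendsto (fun m : ℕ => m * (p - 1) + 1) atTop atTop := by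
    refine tendsto_atTop_mono (fun m => ?_) tendsto_id
    have : m * 1 ≤ m * (p - 1) := Nat.mul_le_mul_left _ (by omega)
    simp only [id]
    omega
  have hL2 := (hL.comp hmt).const_mul ((s / (2 * Real.pi) * (√(-(2 * Real.pi * D)) / √S) : ℝ) : ℂ)
  have hL3 := (Complex.continuous_re.tendsto _).comp hL2
  have hlimv : (((s / (2 * Real.pi) * (√(-(2 * Real.pi * D)) / √S) : ℝ) : ℂ) *
      ((√(Real.pi / (-(s ^ 2 * D) / S / 2)) : ℝ) : ℂ)).re = 1 := by
    rw [← Complex.ofReal_mul, Complex.ofReal_re]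
    have hE : 0 < -D := by linarith
    have e1 : Real.pi / (-(s ^ 2 * D) / S / 2) = ((2 * Real.pi) ^ 2 / s ^ 2) * (S / (-(2 * Real.pi * D))) := by
      have := hD0.ne
      have := Real.pi_ne_zero
      field_simp
    have hp2 : 0 < -(2 * Real.pi * D) := by nlinarith [Real.pi_pos, mul_pos Real.pi_pos hE]
    have hpi := Real.pi_pos
    rw [e1, Real.sqrt_mul (by positivity), Real.sqrt_div (by positivity), Real.sqrt_div hS.le,
      Real.sqrt_sq (by positivity), Real.sqrt_sq hs.le]
    have h1 : 0 < √S := Real.sqrt_pos.2 hS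
    have h2 : 0 < √(-(2 * Real.pi * D)) := Real.sqrt_pos.2 hp2
    field_simp
  rw [hlimv] at hL3
  refine hL3.congr fun m => ?_
  have hci := S9.coeff_integral hp hs hs1 hpos y h0 heq (m * (p - 1))
  rw [S9.integral_period hp hs hs1 hpos m] at hci
  simp only [Function.comp]
  set J := ∫ θ in -(Real.pi / ((p : ℝ) - 1))..(Real.pi / ((p : ℝ) - 1)),
      Complex.exp (θ * Complex.I) * S9.hfun p d s θ ^ (m * (p - 1) + 1) with hJ
  set N := m * (p - 1) with hN
  have hpc : (p : ℂ) - 1 ≠ 0 := by exact_mod_cast hp1.ne'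
  have hsc : (s : ℂ) ≠ 0 := by exact_mod_cast hs.ne'
  have hJv : J = ((2 * Real.pi * (((PowerSeries.coeff (N + 1) y : ℚ) : ℝ) * (N + 1)) * S ^ (N + 1) /
      (s * ((p : ℝ) - 1)) : ℝ) : ℂ) := by
    push_cast
    rw [eq_div_iff (mul_ne_zero hsc hpc)]
    rw [← hSdef] at hci
    linear_combination -hci
  rw [hJv, ← Complex.ofReal_mul, ← Complex.ofReal_mul, Complex.ofReal_re]
  have hn0 : (0 : ℝ) < ((N + 1 : ℕ) : ℝ) := by positivity
  have r1 : ((N + 1 : ℕ) : ℝ) ^ ((3 : ℝ) / 2) = ((N + 1 : ℕ) : ℝ) * √((N + 1 : ℕ) : ℝ) := by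
    rw [Real.sqrt_eq_rpow, show (3 : ℝ) / 2 = 1 + 1 / 2 by norm_num, Real.rpow_add hn0, Real.rpow_one]
  have r2 : S ^ (((N + 1 : ℕ) : ℝ) - 1 / 2) = S ^ (N + 1) / √S := by
    rw [Real.rpow_sub hS, Real.rpow_natCast, Real.sqrt_eq_rpow]
  rw [r1, r2]
  have h1 : 0 < √S := Real.sqrt_pos.2 hS
  have hpi := Real.pi_pos
  push_cast
  field_simp
end
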